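/- arXiv:0712.2631 — 3 statements merged into one kernel-verified Lean document; each statement's English description precedes it below -/
import Mathlib

section
/- Let n ≥ 1 and let K, T ⊂ ℝ^{2n} be convex bodies. Then c(K+T)^{1/2} ≥ c(K)^{1/2} + c(T)^{1/2}, where K+T = {x+y : x ∈ K, y ∈ T} is the Minkowski sum. -/
open MeasureTheory Real Set Filter intervalIntegral Metric
open scoped InnerProductSpace Topology Pointwise

noncomputable section

/-- The phase space `ℝ^{2n}`. -/
abbrev E (n : ℕ) := EuclideanSpace ℝ (Fin (2 * n))

/-- The standard complex structure `J` on `ℝ^{2n}`, given in coordinates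
`(x₁,y₁,…,xₙ,yₙ)` by `J(x₁,y₁,…,xₙ,yₙ) = (−y₁,x₁,…,−yₙ,xₙ)`. -/
def Jmap (n : ℕ) (v : E n) : E n := WithLp.toLp 2 fun i =>
  if _h : i.val % 2 = 0 then -v ⟨i.val + 1, by have := i.isLt; omega⟩
  else v ⟨i.val - 1, by have := i.isLt; omega⟩

/-- The support function `h_K(u) = sup_{x ∈ K} ⟨x, u⟩`. -/
def suppFn (n : ℕ) (K : Set (E n)) (u : E n) : ℝ :=
  sSup ((fun x => ⟪x, u⟫_ℝ) '' K)

/-- A convex body: a compact convex set with nonempty interior. -/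
def IsConvexBody (n : ℕ) (K : Set (E n)) : Prop :=
  IsCompact K ∧ Convex ℝ K ∧ (interior K).Nonempty

/-- Membership in the loop space `𝓔_p`: the pair `(z, dz)` represents an absolutely
continuous `2π`-periodic loop `z` with derivative `dz ∈ L^p([0,2π])`, mean zero and
normalized action `(1/2)∫₀^{2π} ⟨J z, ż⟩ = 1`. -/
def InE (n : ℕ) (p : ℝ) (z dz : ℝ → E n) : Prop :=
  Function.Periodic z (2 * π) ∧
  (∀ a b : ℝ, IntervalIntegrable dz volume a b) ∧
  (∀ t, z t = z 0 + ∫ s in (0:ℝ)..t, dz s) ∧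
  MemLp dz (ENNReal.ofReal p) (volume.restrict (Set.Ioc (0:ℝ) (2 * π))) ∧
  (∫ t in (0:ℝ)..(2 * π), z t) = 0 ∧
  (1 / 2) * ∫ t in (0:ℝ)..(2 * π), ⟪Jmap n (z t), dz t⟫_ℝ = 1

/-- The (Ekeland–Hofer–Zehnder) capacity of a convex body,
`c(S) = (π · inf_{z ∈ 𝓔₂} (1/2π) ∫₀^{2π} h_S(ż(t)) dt)²`. -/
def capacity (n : ℕ) (S : Set (E n)) : ℝ :=
  (π * sInf { r : ℝ | ∃ z dz : ℝ → E n, InE n 2 z dz ∧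
      r = (1 / (2 * π)) * ∫ t in (0:ℝ)..(2 * π), suppFn n S (dz t) }) ^ 2

/-- The action `𝒜(γ) = (1/2) ∫₀^{T₀} ⟨−Jγ̇(t), γ(t)⟩ dt` of a `T₀`-periodic curve. -/
def action (n : ℕ) (γ : ℝ → E n) (T₀ : ℝ) : ℝ :=
  (1 / 2) * ∫ t in (0:ℝ)..T₀, ⟪-Jmap n (deriv γ t), γ t⟫_ℝ

/-- A closed characteristic on `∂K`: a nonconstant `T₀`-periodic `C¹` curve lying on
`∂K` satisfying `γ̇ = d·J∇F(γ)` for some `d > 0`, where `F = ‖·‖_K²`. -/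
def IsClosedCharacteristic (n : ℕ) (K : Set (E n)) (γ : ℝ → E n) (T₀ : ℝ) : Prop :=
  0 < T₀ ∧ Function.Periodic γ T₀ ∧ ContDiff ℝ 1 γ ∧ (∃ s t, γ s ≠ γ t) ∧
  (∀ t, γ t ∈ frontier K) ∧
  ∃ d : ℝ, 0 < d ∧ ∀ t, deriv γ t = d • Jmap n (gradient (fun x => gauge K x ^ 2) (γ t))

/-- A capacity carrier of `K`: a closed characteristic on `∂K` of minimal action. -/
def IsCapacityCarrier (n : ℕ) (K : Set (E n)) (γ : ℝ → E n) (T₀ : ℝ) : Prop :=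
  IsClosedCharacteristic n K γ T₀ ∧
  ∀ γ' T₀', IsClosedCharacteristic n K γ' T₀' → action n γ T₀ ≤ action n γ' T₀'

/-- The minimal action of a closed characteristic on `∂K`. -/
def minAction (n : ℕ) (K : Set (E n)) : ℝ :=
  sInf { a : ℝ | ∃ γ T₀, IsClosedCharacteristic n K γ T₀ ∧ a = action n γ T₀ }

/-- `K` has smooth boundary: its gauge function is `C¹` away from the origin. -/
def HasSmoothBoundary (n : ℕ) (K : Set (E n)) : Prop :=
  ContDiffOn ℝ 1 (gauge K) {(0 : E n)}ᶜ

/-- The `p`-sum `K +ₚ T` of Firey: the convex body with support function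
`(h_K^p + h_T^p)^{1/p}`. -/
def pSum (n : ℕ) (p : ℝ) (K T : Set (E n)) : Set (E n) :=
  { x | ∀ u, ⟪x, u⟫_ℝ ≤ (suppFn n K u ^ p + suppFn n T u ^ p) ^ (1 / p) }

/-- The polar body `T° = {x : ⟨x,y⟩ ≤ 1 for all y ∈ T}`. -/
def polarBody (n : ℕ) (T : Set (E n)) : Set (E n) :=
  { x | ∀ y ∈ T, ⟪x, y⟫_ℝ ≤ 1 }

/-- The length `∫₀^{T₀} ‖γ̇(t)‖_B dt` of a curve measured with the gauge of `B`. -/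
def lengthIn (n : ℕ) (B : Set (E n)) (γ : ℝ → E n) (T₀ : ℝ) : ℝ :=
  ∫ t in (0:ℝ)..T₀, gauge B (deriv γ t)

/-- Critical point of the functional `I_p(z) = ∫₀^{2π} h_K^p(ż(t)) dt` on `𝓔_p`. -/
def IsCriticalPoint (n : ℕ) (p : ℝ) (K : Set (E n)) (z dz : ℝ → E n) : Prop :=
  ∀ ξ dξ : ℝ → E n,
    Function.Periodic ξ (2 * π) →
    (∀ a b : ℝ, IntervalIntegrable dξ volume a b) →
    (∀ t, ξ t = ξ 0 + ∫ s in (0:ℝ)..t, dξ s) →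
    MemLp dξ (ENNReal.ofReal p) (volume.restrict (Set.Ioc (0:ℝ) (2 * π))) →
    (∫ t in (0:ℝ)..(2 * π), ξ t) = 0 →
    (∫ t in (0:ℝ)..(2 * π), ⟪ξ t, Jmap n (dz t)⟫_ℝ) = 0 →
    (∫ t in (0:ℝ)..(2 * π), ⟪gradient (fun u => suppFn n K u ^ p) (dz t), dξ t⟫_ℝ) = 0

/-- The rotation-invariant probability measure on the unit sphere of `ℝ^{2n}`. -/
def sphereMeasure (n : ℕ) : Measure (sphere (0 : E n) 1) :=
  ((volume : Measure (E n)).toSphere Set.univ)⁻¹ • (volume : Measure (E n)).toSphere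

/-- The mean width parameter `M*(K) = ∫_{S^{2n-1}} h_K dσ`. -/
def meanWidth (n : ℕ) (K : Set (E n)) : ℝ :=
  ∫ x : sphere (0 : E n) 1, suppFn n K (x : E n) ∂(sphereMeasure n)

/-!
Support functions are additive under Minkowski sums, so the functional minimized in the definition
of `c(K + T)` is the sum of those for `K` and `T`, and an infimum of sums is at least the sum of the
infima; these are infima over a nonempty set, as a complex line contains circles of action `1`.
The square root undoes the square in the definition of `c` because the functional is nonnegative:
a closed loop has mean velocity `0`, so Jensen's inequality for the sublinear function `h_S` bounds
the mean of `h_S(ż)` below by `h_S(0) = 0`.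
-/

section Infimum

variable {ι α : Type*} [ConditionallyCompleteLattice α] [Add α] [AddLeftMono α] [AddRightMono α]

lemma csInf_image_add_csInf_image_le {s : Set ι} {f g : ι → α} (hs : s.Nonempty)
    (hf : BddBelow (f '' s)) (hg : BddBelow (g '' s)) :
    sInf (f '' s) + sInf (g '' s) ≤ sInf ((fun i => f i + g i) '' s) :=
  le_csInf (hs.image _) <| forall_mem_image.2 fun _ hi =>
    add_le_add (csInf_le hf (mem_image_of_mem f hi)) (csInf_le hg (mem_image_of_mem g hi))

end Infimum

section SupportFunction

variable {n : ℕ} {S K T : Set (E n)}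

lemma bddAbove_image_inner_right {F : Type*} [NormedAddCommGroup F] [InnerProductSpace ℝ F]
    {A : Set F} (hA : Bornology.IsBounded A) (u : F) : BddAbove ((fun x => ⟪x, u⟫_ℝ) '' A) :=
  ((innerSLFlip ℝ u).lipschitz.isBounded_image hA).bddAbove

lemma inner_le_suppFn (hS : Bornology.IsBounded S) {x : E n} (hx : x ∈ S) (u : E n) :
    ⟪x, u⟫_ℝ ≤ suppFn n S u :=
  le_csSup (bddAbove_image_inner_right hS u) (mem_image_of_mem _ hx)

lemma suppFn_le (hne : S.Nonempty) {u : E n} {c : ℝ} (h : ∀ x ∈ S, ⟪x, u⟫_ℝ ≤ c) :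
    suppFn n S u ≤ c :=
  csSup_le (hne.image _) (forall_mem_image.2 h)

lemma suppFn_zero (hne : S.Nonempty) : suppFn n S 0 = 0 := by
  simp [suppFn, hne.image_const]

lemma suppFn_add (hK : Bornology.IsBounded K) (hT : Bornology.IsBounded T)
    (hKne : K.Nonempty) (hTne : T.Nonempty) (u : E n) :
    suppFn n (K + T) u = suppFn n K u + suppFn n T u := by
  have image_add : (fun x => ⟪x, u⟫_ℝ) '' (K + T) =
      (fun x => ⟪x, u⟫_ℝ) '' K + (fun x => ⟪x, u⟫_ℝ) '' T :=
    Set.image_add (innerSLFlip ℝ u)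
  rw [suppFn, image_add]
  exact csSup_add (hKne.image _) (bddAbove_image_inner_right hK u)
    (hTne.image _) (bddAbove_image_inner_right hT u)

lemma lipschitzWith_suppFn (hne : S.Nonempty) {R : NNReal} (hR : ∀ x ∈ S, ‖x‖ ≤ R) :
    LipschitzWith R (suppFn n S) := by
  have hS : Bornology.IsBounded S := isBounded_iff_forall_norm_le.2 ⟨R, hR⟩
  refine LipschitzWith.of_le_add_mul R fun u v => suppFn_le hne fun x hx => ?_
  calc ⟪x, u⟫_ℝ = ⟪x, v⟫_ℝ + ⟪x, u - v⟫_ℝ := by rw [inner_sub_right]; ring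
    _ ≤ ⟪x, v⟫_ℝ + ‖x‖ * ‖u - v‖ := by gcongr; exact real_inner_le_norm x (u - v)
    _ ≤ suppFn n S v + R * dist u v := by
      rw [dist_eq_norm]
      gcongr
      exacts [inner_le_suppFn hS hx v, hR x hx]

variable {α : Type*} [MeasurableSpace α] {μ : Measure α} {f : α → E n}

lemma memLp_suppFn_comp (hS : Bornology.IsBounded S) (hne : S.Nonempty) {p : ENNReal}
    (hf : MemLp f p μ) : MemLp (fun a => suppFn n S (f a)) p μ := by
  obtain ⟨R, -, hR⟩ := hS.exists_pos_norm_le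
  have hlip : LipschitzWith R.toNNReal (suppFn n S) :=
    lipschitzWith_suppFn hne fun x hx => (hR x hx).trans R.le_coe_toNNReal
  exact hlip.comp_memLp (suppFn_zero hne) hf

lemma integrable_suppFn_comp (hS : Bornology.IsBounded S) (hne : S.Nonempty)
    (hf : Integrable f μ) : Integrable (fun a => suppFn n S (f a)) μ :=
  memLp_one_iff_integrable.1 (memLp_suppFn_comp hS hne (memLp_one_iff_integrable.2 hf))

lemma suppFn_integral_le (hS : Bornology.IsBounded S) (hne : S.Nonempty) (hf : Integrable f μ) :
    suppFn n S (∫ a, f a ∂μ) ≤ ∫ a, suppFn n S (f a) ∂μ :=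
  suppFn_le hne fun x hx =>
    calc ⟪x, ∫ a, f a ∂μ⟫_ℝ = ∫ a, ⟪x, f a⟫_ℝ ∂μ := (integral_inner hf x).symm
      _ ≤ ∫ a, suppFn n S (f a) ∂μ :=
        integral_mono (hf.const_inner x) (integrable_suppFn_comp hS hne hf)
          fun a => inner_le_suppFn hS hx (f a)

end SupportFunction

section Ellipse

variable {F : Type*} [NormedAddCommGroup F]

/-- The ellipse with conjugate semi-diameters `a` and `b`, traversed with period `2π`. Its velocity
is the ellipse with semi-diameters `b` and `-a`. -/
def ellipse [NormedSpace ℝ F] (a b : F) (t : ℝ) : F := cos t • a + sin t • b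

lemma hasDerivAt_ellipse [NormedSpace ℝ F] (a b : F) (t : ℝ) :
    HasDerivAt (ellipse a b) (ellipse b (-a) t) t := by
  have h := ((hasDerivAt_cos t).smul_const a).add ((hasDerivAt_sin t).smul_const b)
  exact h.congr_deriv (by rw [ellipse]; module)

lemma continuous_ellipse [NormedSpace ℝ F] (a b : F) : Continuous (ellipse a b) :=
  (continuous_cos.smul continuous_const).add (continuous_sin.smul continuous_const)

lemma periodic_ellipse [NormedSpace ℝ F] (a b : F) : Function.Periodic (ellipse a b) (2 * π) :=
  fun t => by simp only [ellipse, cos_add_two_pi, sin_add_two_pi]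

lemma integral_ellipse [NormedSpace ℝ F] [CompleteSpace F] (a b : F) (s t : ℝ) :
    ∫ r in s..t, ellipse b (-a) r = ellipse a b t - ellipse a b s :=
  integral_eq_sub_of_hasDerivAt (fun r _ => hasDerivAt_ellipse a b r)
    ((continuous_ellipse b (-a)).intervalIntegrable s t)

lemma integral_ellipse_period [NormedSpace ℝ F] [CompleteSpace F] (a b : F) :
    ∫ t in (0 : ℝ)..(2 * π), ellipse a b t = 0 := by
  simpa only [neg_neg, (periodic_ellipse (-b) a).eq, sub_self] using
    integral_ellipse (-b) a 0 (2 * π)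

lemma norm_ellipse_of_inner_eq_zero [InnerProductSpace ℝ F] {a b : F} (hab : ⟪a, b⟫_ℝ = 0)
    (hnorm : ‖a‖ = ‖b‖) (t : ℝ) : ‖ellipse a b t‖ = ‖b‖ := by
  have horth : ⟪cos t • a, sin t • b⟫_ℝ = 0 := by
    rw [real_inner_smul_left, real_inner_smul_right, hab, mul_zero, mul_zero]
  have hsq : ‖ellipse a b t‖ ^ 2 = ‖b‖ ^ 2 := by
    rw [ellipse, norm_add_sq_real, horth, norm_smul, norm_smul, hnorm, norm_eq_abs, norm_eq_abs,
      mul_pow, mul_pow, sq_abs, sq_abs]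
    linear_combination ‖b‖ ^ 2 * cos_sq_add_sin_sq t
  exact (sq_eq_sq₀ (norm_nonneg _) (norm_nonneg _)).1 hsq

end Ellipse

section Loops

variable {n : ℕ} {p : ℝ}

lemma Jmap_add (v w : E n) : Jmap n (v + w) = Jmap n v + Jmap n w := by
  ext i
  simp only [Jmap, PiLp.add_apply]
  split_ifs <;> ring

lemma Jmap_smul (c : ℝ) (v : E n) : Jmap n (c • v) = c • Jmap n v := by
  ext i
  simp only [Jmap, PiLp.smul_apply, smul_eq_mul]
  split_ifs <;> ring

lemma Jmap_Jmap (v : E n) : Jmap n (Jmap n v) = -v := by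
  ext i
  rcases Nat.mod_two_eq_zero_or_one i with hi | hi
  · have hsucc : (i.val + 1) % 2 ≠ 0 := by omega
    simp [Jmap, hi, hsucc]
  · have hpred : (i.val - 1) % 2 = 0 := by omega
    have hi_pos : i.val - 1 + 1 = i.val := by omega
    simp [Jmap, hi, hpred, hi_pos]

lemma Jmap_single_even (k : Fin n) (c : ℝ) :
    Jmap n (EuclideanSpace.single ⟨2 * k, by omega⟩ c) =
      EuclideanSpace.single ⟨2 * k + 1, by omega⟩ c := by
  ext i
  rcases Nat.mod_two_eq_zero_or_one i with hi | hi
  · have h_succ : i.val + 1 ≠ 2 * k := by omega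
    have h_self : i.val ≠ 2 * k + 1 := by omega
    simp [Jmap, hi, Fin.ext_iff, h_succ, h_self]
  · have h_iff : i.val - 1 = 2 * k ↔ i.val = 2 * k + 1 := by omega
    simp [Jmap, hi, Fin.ext_iff, h_iff]

lemma Jmap_ellipse (a b : E n) (t : ℝ) :
    Jmap n (ellipse a b t) = ellipse (Jmap n a) (Jmap n b) t := by
  simp only [ellipse, Jmap_add, Jmap_smul]

lemma inE_ellipse_Jmap {a : E n} (horth : ⟪Jmap n a, a⟫_ℝ = 0) (hJ : ‖Jmap n a‖ = ‖a‖)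
    (hnorm : π * ‖a‖ ^ 2 = 1) :
    InE n p (ellipse a (Jmap n a)) (ellipse (Jmap n a) (-a)) := by
  have hcont := continuous_ellipse (Jmap n a) (-a)
  have hspeed (t : ℝ) : ‖ellipse (Jmap n a) (-a) t‖ = ‖a‖ := by
    simpa only [norm_neg] using norm_ellipse_of_inner_eq_zero
      (b := -a) (by rw [inner_neg_right, horth, neg_zero]) (by rw [hJ, norm_neg]) t
  have haction (t : ℝ) :
      ⟪Jmap n (ellipse a (Jmap n a) t), ellipse (Jmap n a) (-a) t⟫_ℝ = ‖a‖ ^ 2 := by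
    rw [Jmap_ellipse, Jmap_Jmap, real_inner_self_eq_norm_sq, hspeed]
  refine ⟨periodic_ellipse _ _, hcont.intervalIntegrable, fun t => ?_,
    .of_bound hcont.aestronglyMeasurable ‖a‖ (ae_of_all _ fun t => (hspeed t).le),
    integral_ellipse_period _ _, ?_⟩
  · rw [integral_ellipse, add_sub_cancel]
  · simp only [haction, intervalIntegral.integral_const, sub_zero, smul_eq_mul]
    linear_combination hnorm

lemma exists_inE (hn : 1 ≤ n) (p : ℝ) : ∃ z dz : ℝ → E n, InE n p z dz := by
  have hJ := Jmap_single_even (⟨0, hn⟩ : Fin n) (√π)⁻¹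
  refine ⟨_, _, inE_ellipse_Jmap (a := EuclideanSpace.single ⟨2 * 0, by omega⟩ (√π)⁻¹) ?_ ?_ ?_⟩
  · rw [hJ, EuclideanSpace.inner_single_left]
    simp
  · rw [hJ, PiLp.norm_single, PiLp.norm_single]
  · rw [PiLp.norm_single, norm_eq_abs, sq_abs, inv_pow, sq_sqrt pi_pos.le,
      mul_inv_cancel₀ pi_ne_zero]

lemma integral_velocity_eq_zero {z dz : ℝ → E n} (h : InE n p z dz) :
    ∫ t in (0 : ℝ)..(2 * π), dz t = 0 := by
  obtain ⟨hper, -, hz, -⟩ := h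
  simpa only [hper.eq, left_eq_add] using hz (2 * π)

end Loops

section MeanSupport

variable {n : ℕ} {S K T : Set (E n)} {dz : ℝ → E n}

/-- The mean `(1/2π) ∫₀^{2π} h_S(ż(t)) dt` of the support function of `S` along a velocity `ż`:
the functional minimized in the definition of `capacity n S`. -/
def meanSupp (n : ℕ) (S : Set (E n)) (dz : ℝ → E n) : ℝ :=
  (1 / (2 * π)) * ∫ t in (0 : ℝ)..(2 * π), suppFn n S (dz t)

/-- The derivatives of the loops in `𝓔_p`. -/
def velocities (n : ℕ) (p : ℝ) : Set (ℝ → E n) := {dz | ∃ z, InE n p z dz}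

lemma meanSupp_add (hK : Bornology.IsBounded K) (hT : Bornology.IsBounded T)
    (hKne : K.Nonempty) (hTne : T.Nonempty) (hdz : IntervalIntegrable dz volume 0 (2 * π)) :
    meanSupp n (K + T) dz = meanSupp n K dz + meanSupp n T dz := by
  have hint {S : Set (E n)} (hS : Bornology.IsBounded S) (hne : S.Nonempty) :
      IntervalIntegrable (fun t => suppFn n S (dz t)) volume 0 (2 * π) :=
    ⟨integrable_suppFn_comp hS hne hdz.1, integrable_suppFn_comp hS hne hdz.2⟩
  simp only [meanSupp, suppFn_add hK hT hKne hTne]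
  rw [intervalIntegral.integral_add (hint hK hKne) (hint hT hTne), mul_add]

lemma meanSupp_nonneg (hS : Bornology.IsBounded S) (hne : S.Nonempty)
    (hdz : IntervalIntegrable dz volume 0 (2 * π)) (hmean : ∫ t in (0 : ℝ)..(2 * π), dz t = 0) :
    0 ≤ meanSupp n S dz := by
  rw [integral_of_le two_pi_pos.le] at hmean
  have jensen := suppFn_integral_le hS hne hdz.1
  rw [hmean, suppFn_zero hne, ← integral_of_le two_pi_pos.le] at jensen
  exact mul_nonneg (by positivity) jensen

lemma zero_mem_lowerBounds_meanSupp_image_velocities (hS : Bornology.IsBounded S)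
    (hne : S.Nonempty) (p : ℝ) : 0 ∈ lowerBounds (meanSupp n S '' velocities n p) :=
  forall_mem_image.2 fun _ ⟨_, h⟩ =>
    meanSupp_nonneg hS hne (h.2.1 _ _) (integral_velocity_eq_zero h)

end MeanSupport

section Capacity

variable {n : ℕ} {S : Set (E n)}

lemma capacity_eq_sq_sInf_meanSupp (n : ℕ) (S : Set (E n)) :
    capacity n S = (π * sInf (meanSupp n S '' velocities n 2)) ^ 2 := by
  have hset : {r : ℝ | ∃ z dz : ℝ → E n, InE n 2 z dz ∧ r = meanSupp n S dz} =
      meanSupp n S '' velocities n 2 := by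
    ext r
    constructor
    · rintro ⟨z, dz, h, rfl⟩
      exact mem_image_of_mem _ ⟨z, h⟩
    · rintro ⟨dz, ⟨z, h⟩, rfl⟩
      exact ⟨z, dz, h, rfl⟩
  rw [← hset]
  rfl

lemma sqrt_capacity (hS : Bornology.IsBounded S) (hne : S.Nonempty) :
    √(capacity n S) = π * sInf (meanSupp n S '' velocities n 2) := by
  rw [capacity_eq_sq_sInf_meanSupp]
  exact sqrt_sq <| mul_nonneg pi_pos.le <|
    Real.sInf_nonneg fun _ hr => zero_mem_lowerBounds_meanSupp_image_velocities hS hne 2 hr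

theorem brunn_minkowski_capacity_general {n : ℕ} (hn : 1 ≤ n) {K T : Set (E n)}
    (hK : Bornology.IsBounded K) (hT : Bornology.IsBounded T)
    (hKne : K.Nonempty) (hTne : T.Nonempty) :
    √(capacity n K) + √(capacity n T) ≤ √(capacity n (K + T)) := by
  have hvel : (velocities n 2).Nonempty :=
    let ⟨z, dz, h⟩ := exists_inE hn 2
    ⟨dz, z, h⟩
  have hadd : meanSupp n (K + T) '' velocities n 2 =
      (fun dz => meanSupp n K dz + meanSupp n T dz) '' velocities n 2 :=
    image_congr fun _ ⟨_, h⟩ => meanSupp_add hK hT hKne hTne (h.2.1 _ _)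
  rw [sqrt_capacity hK hKne, sqrt_capacity hT hTne,
    sqrt_capacity (hK.add hT) (hKne.add hTne), hadd, ← mul_add]
  exact mul_le_mul_of_nonneg_left
    (csInf_image_add_csInf_image_le hvel
      ⟨0, zero_mem_lowerBounds_meanSupp_image_velocities hK hKne 2⟩
      ⟨0, zero_mem_lowerBounds_meanSupp_image_velocities hT hTne 2⟩) pi_pos.le

end Capacity

/-- **Brunn–Minkowski inequality for the Ekeland–Hofer–Zehnder capacity.**
For `n ≥ 1` and convex bodies `K, T ⊂ ℝ^{2n}`,
`c(K+T)^{1/2} ≥ c(K)^{1/2} + c(T)^{1/2}`. -/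
theorem brunn_minkowski_capacity (n : ℕ) (hn : 1 ≤ n) (K T : Set (E n))
    (hK : IsConvexBody n K) (hT : IsConvexBody n T) :
    Real.sqrt (capacity n (K + T)) ≥ Real.sqrt (capacity n K) + Real.sqrt (capacity n T) :=
  brunn_minkowski_capacity_general hn hK.1.isBounded hT.1.isBounded
    (hK.2.2.mono interior_subset) (hT.2.2.mono interior_subset)
end
end

section
/- Let K ⊂ ℝ^{2n} be a convex body with 0 in its interior whose support function h_K is C¹ on ℝ^{2n}∖{0}, and let p > 1. Then z ∈ 𝓔_p is a critical point of the functional I_p(z) = ∫₀^{2π} h_K^p(ż(t)) dt if and only if there exists a fixed vector α ∈ ℝ^{2n} such that ∇(h_K^p)(ż(t)) = (p/2)·λ·J z(t) + α for almost every t, where λ = I_p(z). -/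
open MeasureTheory Real Set Filter intervalIntegral Metric
open scoped InnerProductSpace Topology Pointwise

noncomputable section

/-!
The Euler equation is the Lagrange multiplier rule. A variation of `z` is a mean-zero loop `ξ`
tangent to the action constraint, and `ξ` is determined by its derivative, which is an arbitrary
`L^p` function with `∫ ξ̇ = 0`. Integration by parts rewrites the tangency condition
`∫ ⟪ξ, Jż⟫ = 0` as `∫ ⟪Jz, ξ̇⟫ = 0`. So `z` is critical iff `∇(h_K^p)(ż)` annihilates every `ξ̇`
orthogonal to the constants and to `Jz`, i.e. iff `∇(h_K^p)(ż) = c • Jz + α`: the vector `α` is the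
multiplier of the periodicity constraint `∫ ξ̇ = 0` and `c` that of the action constraint. Pairing
with `ż` evaluates `c`: the left-hand side gives `p * I_p(z)` by Euler's identity for
`p`-homogeneous functions, and the right-hand side gives `2 * c` because the action is `1`.
-/

open scoped Gradient

theorem eq_zero_of_eq_two_rpow_smul {W : Type*} [AddCommGroup W] [Module ℝ W] {q : ℝ} (hq : q ≠ 0)
    {w : W} (h : w = (2 : ℝ) ^ q • w) : w = 0 := by
  have hone : (2 : ℝ) ^ q ≠ 1 := by
    rw [← rpow_zero 2, Ne, rpow_right_inj two_pos (by norm_num)]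
    exact hq
  have hsub : ((2 : ℝ) ^ q - 1) • w = 0 := by rw [sub_smul, one_smul, ← h, sub_self]
  exact (smul_eq_zero.1 hsub).resolve_left (sub_ne_zero.2 hone)

/-- `f` is positively homogeneous of degree `p`. The scalar `c = 0` is left out of the definition,
so that it does not prescribe `f 0` through the convention `0 ^ p = 0` for `p ≠ 0`. -/
def IsPosHomogeneous {V : Type*} [AddCommGroup V] [Module ℝ V] (p : ℝ) (f : V → ℝ) : Prop :=
  ∀ ⦃c : ℝ⦄, 0 < c → ∀ u, f (c • u) = c ^ p * f u

namespace IsPosHomogeneous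

section Module

variable {V : Type*} [AddCommGroup V] [Module ℝ V] {p q : ℝ} {f : V → ℝ}

theorem map_zero (hf : IsPosHomogeneous p f) (hp : p ≠ 0) : f 0 = 0 :=
  eq_zero_of_eq_two_rpow_smul hp <| by simpa using hf two_pos 0

theorem rpow (hf : IsPosHomogeneous q f) (hnonneg : ∀ u, 0 ≤ f u) (p : ℝ) :
    IsPosHomogeneous (q * p) fun u ↦ f u ^ p := fun c hc u ↦ by
  simp only [hf hc u, mul_rpow (rpow_nonneg hc.le q) (hnonneg u), rpow_mul hc.le]

end Module

theorem fderiv_smul {V : Type*} [NormedAddCommGroup V] [NormedSpace ℝ V] {p : ℝ} {f : V → ℝ}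
    (hf : IsPosHomogeneous p f) {c : ℝ} (hc : 0 < c) (u : V) :
    fderiv ℝ f (c • u) = c ^ (p - 1) • fderiv ℝ f u := by
  have hchain : c • fderiv ℝ f (c • u) = c ^ p • fderiv ℝ f u := by
    rw [← fderiv_comp_smul, funext (hf hc)]
    exact congrFun (fderiv_const_smul_field (f := f) (c ^ p)) u
  rw [rpow_sub_one hc.ne', div_eq_inv_mul, mul_smul, ← hchain, inv_smul_smul₀ hc.ne']

section Gradient

variable {V : Type*} [NormedAddCommGroup V] [InnerProductSpace ℝ V] {p : ℝ} {f : V → ℝ}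

theorem gradient_smul [CompleteSpace V] (hf : IsPosHomogeneous p f) {c : ℝ} (hc : 0 < c) (u : V) :
    ∇ f (c • u) = c ^ (p - 1) • ∇ f u := by
  simp only [gradient, hf.fderiv_smul hc, map_smulₛₗ]
  rfl

theorem gradient_zero [CompleteSpace V] (hf : IsPosHomogeneous p f) (hp : p ≠ 1) : ∇ f 0 = 0 :=
  eq_zero_of_eq_two_rpow_smul (sub_ne_zero.2 hp) <| by simpa using hf.gradient_smul two_pos 0

theorem inner_gradient_self [CompleteSpace V] (hf : IsPosHomogeneous p f) {u : V}
    (hd : u ≠ 0 → DifferentiableAt ℝ f u) : ⟪∇ f u, u⟫_ℝ = p * f u := by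
  obtain rfl | hu := eq_or_ne u 0
  · rw [inner_zero_right, eq_comm, mul_eq_zero]
    exact or_iff_not_imp_left.2 hf.map_zero
  have hray : HasDerivAt (fun c : ℝ ↦ c • u) u 1 := by
    simpa using (hasDerivAt_id (1 : ℝ)).smul_const u
  have hchain : HasDerivAt (fun c : ℝ ↦ f (c • u)) ⟪∇ f u, u⟫_ℝ 1 := by
    have hfd : HasFDerivAt f (fderiv ℝ f u) ((1 : ℝ) • u) := by simpa using (hd hu).hasFDerivAt
    simpa [gradient, Function.comp_def] using hfd.comp_hasDerivAt 1 hray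
  have hpow : HasDerivAt (fun c : ℝ ↦ c ^ p * f u) (p * f u) 1 := by
    simpa using (hasDerivAt_rpow_const (x := 1) (p := p) (Or.inl one_ne_zero)).mul_const (f u)
  have heq : (fun c : ℝ ↦ f (c • u)) =ᶠ[𝓝 1] fun c ↦ c ^ p * f u := by
    filter_upwards [lt_mem_nhds zero_lt_one] with c hc using hf hc u
  exact hchain.unique (hpow.congr_of_eventuallyEq heq)

theorem exists_norm_gradient_le [ProperSpace V] (hf : IsPosHomogeneous p f) (hp : p ≠ 1)
    (hsmooth : ContDiffOn ℝ 1 f {0}ᶜ) : ∃ C, ∀ u, ‖∇ f u‖ ≤ C * ‖u‖ ^ (p - 1) := by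
  have hsphere : sphere (0 : V) 1 ⊆ {0}ᶜ := fun u hu ↦ ne_zero_of_mem_unit_sphere ⟨u, hu⟩
  have hcont : ContinuousOn (∇ f) (sphere 0 1) :=
    (InnerProductSpace.toDual ℝ V).symm.continuous.comp_continuousOn <|
      (hsmooth.continuousOn_fderiv_of_isOpen isOpen_compl_singleton le_rfl).mono hsphere
  obtain ⟨C, hC⟩ := (isCompact_sphere (0 : V) 1).exists_bound_of_continuousOn hcont
  refine ⟨C, fun u ↦ ?_⟩
  obtain rfl | hu := eq_or_ne u 0
  · simp [hf.gradient_zero hp, zero_rpow (sub_ne_zero.2 hp)]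
  have hnorm : 0 < ‖u‖ := norm_pos_iff.2 hu
  have hunit : ‖u‖⁻¹ • u ∈ sphere (0 : V) 1 := by simp [norm_smul, hnorm.ne']
  calc ‖∇ f u‖ = ‖∇ f (‖u‖ • ‖u‖⁻¹ • u)‖ := by rw [smul_inv_smul₀ hnorm.ne']
    _ = ‖u‖ ^ (p - 1) * ‖∇ f (‖u‖⁻¹ • u)‖ := by
      rw [hf.gradient_smul hnorm, norm_smul, norm_of_nonneg (by positivity)]
    _ ≤ C * ‖u‖ ^ (p - 1) := by
      rw [mul_comm]
      gcongr
      exact hC _ hunit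

theorem integrable_gradient_comp [FiniteDimensional ℝ V] {α : Type*} [MeasurableSpace α]
    {μ : Measure α} [IsFiniteMeasure μ] (hf : IsPosHomogeneous p f) (hp : 1 < p)
    (hsmooth : ContDiffOn ℝ 1 f {0}ᶜ) {u : α → V} (hu : MemLp u (ENNReal.ofReal p) μ) :
    Integrable (fun x ↦ ∇ f (u x)) μ := by
  borelize V
  have hp1 : 0 < p - 1 := sub_pos.2 hp
  have hmem : MemLp u (ENNReal.ofReal (p - 1)) μ :=
    hu.mono_exponent <| ENNReal.ofReal_le_ofReal (sub_le_self p zero_le_one)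
  have hpow : Integrable (fun x ↦ ‖u x‖ ^ (p - 1)) μ := by
    simpa only [ENNReal.toReal_ofReal hp1.le] using
      hmem.integrable_norm_rpow (ENNReal.ofReal_pos.2 hp1).ne' ENNReal.ofReal_ne_top
  have hmeas : Measurable (∇ f) :=
    (InnerProductSpace.toDual ℝ V).symm.continuous.measurable.comp (measurable_fderiv ℝ f)
  obtain ⟨C, hC⟩ := hf.exists_norm_gradient_le hp.ne' hsmooth
  exact (hpow.const_mul C).mono' (hmeas.comp_aemeasurable hu.1.aemeasurable).aestronglyMeasurable
    (ae_of_all _ fun x ↦ hC (u x))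

end Gradient

end IsPosHomogeneous

section Multiplier

variable {α V : Type*} [MeasurableSpace α] {μ : Measure α} [NormedAddCommGroup V]
  [InnerProductSpace ℝ V]

theorem integrable_inner_simpleFunc {F : α → V} (hF : Integrable F μ) (v : SimpleFunc α V) :
    Integrable (fun x ↦ ⟪F x, v x⟫_ℝ) μ := by
  obtain ⟨C, hC⟩ := v.exists_forall_norm_le
  exact (innerSL ℝ).integrable_of_bilin_of_bdd_right C hF v.aestronglyMeasurable (ae_of_all _ hC)

/-- The linear functional `v ↦ ∫ ⟪F, v⟫` defined by an integrable `F`. The test functions `v` are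
simple functions because these are bounded, so that no integrability beyond `L¹` is asked of `F`. -/
def simpleFuncPairing (F : α → V) (hF : Integrable F μ) : SimpleFunc α V →ₗ[ℝ] ℝ where
  toFun v := ∫ x, ⟪F x, v x⟫_ℝ ∂μ
  map_add' v w := by
    simp only [SimpleFunc.coe_add, Pi.add_apply, inner_add_right]
    exact integral_add (integrable_inner_simpleFunc hF v) (integrable_inner_simpleFunc hF w)
  map_smul' c v := by
    simp only [SimpleFunc.coe_smul, Pi.smul_apply, real_inner_smul_right,
      MeasureTheory.integral_const_mul, RingHom.id_apply, smul_eq_mul]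

theorem simpleFuncPairing_apply {F : α → V} (hF : Integrable F μ) (v : SimpleFunc α V) :
    simpleFuncPairing F hF v = ∫ x, ⟪F x, v x⟫_ℝ ∂μ :=
  rfl

theorem ae_eq_zero_of_forall_simpleFuncPairing_eq_zero [CompleteSpace V] {F : α → V}
    (hF : Integrable F μ) (h : ∀ v, simpleFuncPairing F hF v = 0) : F =ᵐ[μ] 0 := by
  refine hF.ae_eq_zero_of_forall_setIntegral_eq_zero fun s hs _ ↦ ?_
  refine integral_eq_zero_of_forall_integral_inner_eq_zero ℝ F hF.integrableOn fun c ↦ ?_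
  rw [← MeasureTheory.integral_indicator hs, ← h ((SimpleFunc.const α c).restrict s),
    simpleFuncPairing_apply]
  congr 1 with x
  by_cases hx : x ∈ s <;> simp [hs, hx, real_inner_comm]

theorem exists_ae_eq_sum_smul [CompleteSpace V] {ι : Type*} [Fintype ι] {G : α → V}
    {X : ι → α → V} (hG : Integrable G μ) (hX : ∀ i, Integrable (X i) μ)
    (h : ∀ v : SimpleFunc α V, (∀ i, ∫ x, ⟪X i x, v x⟫_ℝ ∂μ = 0) → ∫ x, ⟪G x, v x⟫_ℝ ∂μ = 0) :
    ∃ c : ι → ℝ, G =ᵐ[μ] fun x ↦ ∑ i, c i • X i x := by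
  have hspan : simpleFuncPairing G hG ∈
      Submodule.span ℝ (range fun i ↦ simpleFuncPairing (X i) (hX i)) :=
    mem_span_of_iInf_ker_le_ker fun v hv ↦ h v fun i ↦ (Submodule.mem_iInf _).1 hv i
  obtain ⟨c, hc⟩ := (Submodule.mem_span_range_iff_exists_fun ℝ).1 hspan
  have hsum : Integrable (fun x ↦ ∑ i, c i • X i x) μ :=
    integrable_finsetSum _ fun i _ ↦ (hX i).smul (c i)
  have hpair (v : SimpleFunc α V) : simpleFuncPairing _ (hG.sub hsum) v = 0 := by
    have hXv (i : ι) : Integrable (fun x ↦ c i * ⟪X i x, v x⟫_ℝ) μ :=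
      (integrable_inner_simpleFunc (hX i) v).const_mul (c i)
    have hcv := DFunLike.congr_fun hc v
    simp only [LinearMap.sum_apply, LinearMap.smul_apply, smul_eq_mul,
      simpleFuncPairing_apply] at hcv
    simp only [simpleFuncPairing_apply, Pi.sub_apply, inner_sub_left, sum_inner,
      real_inner_smul_left]
    rw [integral_sub (integrable_inner_simpleFunc hG v) (integrable_finsetSum _ fun i _ ↦ hXv i),
      integral_finsetSum _ fun i _ ↦ hXv i]
    simp only [MeasureTheory.integral_const_mul, hcv, sub_self]
  exact ⟨c, (sub_ae_eq_zero _ _).1 (ae_eq_zero_of_forall_simpleFuncPairing_eq_zero _ hpair)⟩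

theorem exists_ae_eq_smul_add_const [FiniteDimensional ℝ V] [IsFiniteMeasure μ] {G w : α → V}
    (hG : Integrable G μ) (hw : Integrable w μ)
    (h : ∀ v : SimpleFunc α V, ∫ x, v x ∂μ = 0 → ∫ x, ⟪w x, v x⟫_ℝ ∂μ = 0 →
      ∫ x, ⟪G x, v x⟫_ℝ ∂μ = 0) :
    ∃ (c : ℝ) (a : V), G =ᵐ[μ] fun x ↦ c • w x + a := by
  let b := stdOrthonormalBasis ℝ V
  let X : Option (Fin (Module.finrank ℝ V)) → α → V := fun i ↦ i.elim w fun j _ ↦ b j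
  have hX : ∀ i, Integrable (X i) μ := Option.forall.2 ⟨hw, fun _ ↦ integrable_const _⟩
  obtain ⟨c, hc⟩ := exists_ae_eq_sum_smul hG hX fun v hv ↦ by
    refine h v (InnerProductSpace.ext_inner_left_basis b.toBasis fun j ↦ ?_) (hv none)
    rw [b.coe_toBasis, ← integral_inner v.integrable_of_isFiniteMeasure, inner_zero_right]
    exact hv (some j)
  refine ⟨c none, ∑ j, c (some j) • b j, ?_⟩
  simpa only [Fintype.sum_option, X, Option.elim] using hc

end Multiplier

theorem intervalIntegrable_inner {V : Type*} [NormedAddCommGroup V] [InnerProductSpace ℝ V]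
    {f g : ℝ → V} {a b : ℝ} (hf : Continuous f) (hg : IntervalIntegrable g volume a b) :
    IntervalIntegrable (fun t ↦ ⟪f t, g t⟫_ℝ) volume a b := by
  obtain ⟨C, hC⟩ := isCompact_uIcc.exists_bound_of_continuousOn hf.continuousOn
  rw [intervalIntegrable_iff] at hg ⊢
  exact (innerSL ℝ).integrable_of_bilin_of_bdd_left C hf.aestronglyMeasurable
    (ae_restrict_of_forall_mem measurableSet_uIoc fun t ht ↦ hC t (uIoc_subset_uIcc ht)) hg

/-- `z` is an absolutely continuous loop of period `T` with derivative `dz`. Absolute continuity is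
encoded by `z` being a primitive of the locally integrable function `dz`. -/
structure IsLoop {V : Type*} [NormedAddCommGroup V] [NormedSpace ℝ V] (T : ℝ) (z dz : ℝ → V) :
    Prop where
  periodic : Function.Periodic z T
  intervalIntegrable : ∀ a b, IntervalIntegrable dz volume a b
  eq_add_integral : ∀ t, z t = z 0 + ∫ s in 0..t, dz s

namespace IsLoop

section NormedSpace

variable {V W : Type*} [NormedAddCommGroup V] [NormedSpace ℝ V] [NormedAddCommGroup W]
  [NormedSpace ℝ W] {T : ℝ} {z dz : ℝ → V}

theorem apply_period (hz : IsLoop T z dz) : z T = z 0 := by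
  simpa using hz.periodic 0

theorem integral_deriv_eq_zero (hz : IsLoop T z dz) : ∫ t in 0..T, dz t = 0 := by
  simpa [hz.apply_period] using hz.eq_add_integral T

theorem continuous (hz : IsLoop T z dz) : Continuous z := by
  rw [funext hz.eq_add_integral]
  exact continuous_const.add (continuous_primitive hz.intervalIntegrable 0)

theorem map [CompleteSpace V] [CompleteSpace W] (hz : IsLoop T z dz) (L : V →L[ℝ] W) :
    IsLoop T (fun t ↦ L (z t)) fun t ↦ L (dz t) where
  periodic t := congrArg L (hz.periodic t)
  intervalIntegrable a b :=
    ⟨L.integrable_comp (hz.intervalIntegrable a b).1,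
      L.integrable_comp (hz.intervalIntegrable a b).2⟩
  eq_add_integral t := by
    rw [L.intervalIntegral_comp_comm (hz.intervalIntegrable 0 t), ← map_add, ← hz.eq_add_integral]

end NormedSpace

section Real

variable {T : ℝ} {f df g dg : ℝ → ℝ}

theorem absolutelyContinuousOnInterval (hf : IsLoop T f df) :
    AbsolutelyContinuousOnInterval f 0 T := by
  have hconst : AbsolutelyContinuousOnInterval (fun _ : ℝ ↦ f 0) 0 T :=
    contDiffOn_const.absolutelyContinuousOnInterval
  rw [funext hf.eq_add_integral]
  exact hconst.add <|
    (hf.intervalIntegrable 0 T).absolutelyContinuousOnInterval_intervalIntegral left_mem_uIcc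

theorem ae_deriv_eq (hf : IsLoop T f df) : ∀ᵐ t, t ∈ uIoc 0 T → deriv f t = df t := by
  filter_upwards [(hf.intervalIntegrable 0 T).ae_hasDerivAt_integral] with t ht htT
  rw [funext hf.eq_add_integral]
  exact ((ht (uIoc_subset_uIcc htT) 0 left_mem_uIcc).const_add (f 0)).deriv

theorem integral_mul_deriv_eq_neg (hf : IsLoop T f df) (hg : IsLoop T g dg) :
    ∫ t in 0..T, f t * dg t = -∫ t in 0..T, g t * df t := by
  calc ∫ t in 0..T, f t * dg t = ∫ t in 0..T, f t * deriv g t :=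
        integral_congr_ae <| hg.ae_deriv_eq.mono fun t ht htT ↦ by rw [ht htT]
    _ = f T * g T - f 0 * g 0 - ∫ t in 0..T, deriv f t * g t :=
        hf.absolutelyContinuousOnInterval.integral_mul_deriv_eq_deriv_mul
          hg.absolutelyContinuousOnInterval
    _ = -∫ t in 0..T, deriv f t * g t := by
        rw [hf.apply_period, hg.apply_period, sub_self, zero_sub]
    _ = -∫ t in 0..T, g t * df t := congrArg Neg.neg <|
        integral_congr_ae <| hf.ae_deriv_eq.mono fun t ht htT ↦ by rw [ht htT, mul_comm]

end Real

section Inner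

variable {V : Type*} [NormedAddCommGroup V] [InnerProductSpace ℝ V] {T : ℝ} {z dz w dw : ℝ → V}

theorem integral_inner_deriv_eq_neg [FiniteDimensional ℝ V] (hz : IsLoop T z dz)
    (hw : IsLoop T w dw) : ∫ t in 0..T, ⟪z t, dw t⟫_ℝ = -∫ t in 0..T, ⟪w t, dz t⟫_ℝ := by
  let b := stdOrthonormalBasis ℝ V
  have expand {x y dy : ℝ → V} (hx : Continuous x) (hy : IsLoop T y dy) :
      ∫ t in 0..T, ⟪x t, dy t⟫_ℝ = ∑ i, ∫ t in 0..T, ⟪b i, x t⟫_ℝ * ⟪b i, dy t⟫_ℝ := by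
    have hint i : IntervalIntegrable (fun t ↦ ⟪b i, x t⟫_ℝ * ⟪b i, dy t⟫_ℝ) volume 0 T :=
      ((hy.map (innerSL ℝ (b i))).intervalIntegrable 0 T).continuousOn_mul
        (continuous_const.inner hx).continuousOn
    rw [← intervalIntegral.integral_finsetSum fun i _ ↦ hint i]
    refine integral_congr fun t _ ↦ ?_
    rw [← b.sum_inner_mul_inner]
    exact Finset.sum_congr rfl fun i _ ↦ by rw [real_inner_comm (b i)]
  rw [expand hz.continuous hw, expand hw.continuous hz, ← Finset.sum_neg_distrib]
  exact Finset.sum_congr rfl fun i _ ↦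
    (hz.map (innerSL ℝ (b i))).integral_mul_deriv_eq_neg (hw.map (innerSL ℝ (b i)))

theorem integral_inner_smul_add_const [CompleteSpace V] (hz : IsLoop T z dz) (hw : Continuous w)
    (c : ℝ) (a : V) :
    ∫ t in 0..T, ⟪c • w t + a, dz t⟫_ℝ = c * ∫ t in 0..T, ⟪w t, dz t⟫_ℝ := by
  have hdz := hz.intervalIntegrable 0 T
  have ha : ∫ t in 0..T, ⟪a, dz t⟫_ℝ = 0 := by
    simpa using (hz.map (innerSL ℝ a)).integral_deriv_eq_zero
  simp only [inner_add_left, real_inner_smul_left]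
  rw [intervalIntegral.integral_add ((intervalIntegrable_inner hw hdz).const_mul c)
    (intervalIntegrable_inner continuous_const hdz), ha, add_zero,
    intervalIntegral.integral_const_mul]

end Inner

end IsLoop

theorem exists_isLoop_integral_eq_zero {V : Type*} [NormedAddCommGroup V] [NormedSpace ℝ V]
    [CompleteSpace V] {T : ℝ} (hT : 0 < T) {v : ℝ → V} (hper : Function.Periodic v T)
    (hv : IntervalIntegrable v volume 0 T) (hv0 : ∫ t in 0..T, v t = 0) :
    ∃ z, IsLoop T z v ∧ ∫ t in 0..T, z t = 0 := by
  have hvi := hper.intervalIntegrable₀ hT.ne' hv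
  let F : ℝ → V := fun t ↦ ∫ s in 0..t, v s
  let m : V := T⁻¹ • ∫ t in 0..T, F t
  have hF : Continuous F := continuous_primitive hvi 0
  have hFper : Function.Periodic F T := fun t ↦ by
    change ∫ s in 0..(t + T), v s = ∫ s in 0..t, v s
    rw [← integral_add_adjacent_intervals (hvi 0 t) (hvi t (t + T)),
      hper.intervalIntegral_add_eq t 0, zero_add, hv0, add_zero]
  have hprim (t : ℝ) : F t - m = F 0 - m + ∫ s in 0..t, v s := by
    simp only [F, integral_same]
    abel
  refine ⟨fun t ↦ F t - m, ⟨fun t ↦ by simp only [hFper t], hvi, hprim⟩, ?_⟩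
  rw [intervalIntegral.integral_sub (hF.intervalIntegrable 0 T) intervalIntegrable_const,
    intervalIntegral.integral_const, sub_zero, smul_inv_smul₀ hT.ne', sub_self]

section Periodize

variable {V : Type*} {T : ℝ}

/-- The `T`-periodic simple function which agrees with the simple function `v` on `(0, T]`. -/
def periodizeSimpleFunc (hT : 0 < T) (v : SimpleFunc ℝ V) : SimpleFunc ℝ V :=
  v.comp (toIocMod hT 0) <| by
    rw [funext fun t ↦ toIocMod_eq_sub_fract_mul hT 0 t]
    fun_prop

theorem periodic_periodizeSimpleFunc (hT : 0 < T) (v : SimpleFunc ℝ V) :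
    Function.Periodic (periodizeSimpleFunc hT v) T := fun t ↦
  congrArg v (toIocMod_periodic hT 0 t)

theorem eqOn_periodizeSimpleFunc (hT : 0 < T) (v : SimpleFunc ℝ V) :
    EqOn (periodizeSimpleFunc hT v) v (Ioc 0 T) := fun t ht ↦
  congrArg v <| (toIocMod_eq_self hT).2 <| by rwa [zero_add]

end Periodize

/-- `ξ` is a mean-zero loop of period `T` whose derivative `dξ` lies in `L^q`. These are the loops
along which a functional of the derivative is varied. -/
structure IsMeanZeroLoop {V : Type*} [NormedAddCommGroup V] [NormedSpace ℝ V] (T : ℝ) (q : ENNReal)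
    (ξ dξ : ℝ → V) : Prop extends IsLoop T ξ dξ where
  memLp : MemLp dξ q (volume.restrict (Ioc 0 T))
  integral_eq_zero : ∫ t in 0..T, ξ t = 0

theorem exists_isMeanZeroLoop_eqOn {V : Type*} [NormedAddCommGroup V] [NormedSpace ℝ V]
    [CompleteSpace V] {T : ℝ} (hT : 0 < T) (q : ENNReal) (v : SimpleFunc ℝ V)
    (hv : ∫ t in 0..T, v t = 0) : ∃ ξ dξ, IsMeanZeroLoop T q ξ dξ ∧ EqOn dξ v (Ioc 0 T) := by
  let u := periodizeSimpleFunc hT v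
  have huv : EqOn u v (Ioc 0 T) := eqOn_periodizeSimpleFunc hT v
  have hu : IntervalIntegrable u volume 0 T :=
    (intervalIntegrable_iff_integrableOn_Ioc_of_le hT.le).2 u.integrable_of_isFiniteMeasure
  have hu0 : ∫ t in 0..T, u t = 0 := by
    rw [← hv]
    exact integral_congr_Ioo_of_le hT.le (huv.mono Ioo_subset_Ioc_self)
  obtain ⟨ξ, hξ, hξ0⟩ :=
    exists_isLoop_integral_eq_zero hT (periodic_periodizeSimpleFunc hT v) hu hu0
  exact ⟨ξ, u, ⟨hξ, u.memLp_of_isFiniteMeasure q _, hξ0⟩, huv⟩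

/-- `G` annihilates `ξ̇` for every mean-zero loop `ξ` with `ξ̇ ∈ L^q` and `∫ ⟪ξ, dw⟫ = 0`. For
`G = ∇ H ∘ ż` this is criticality of `z ↦ ∫ H(ż)` under a constraint on `z` whose linearisation is
`ξ ↦ ∫ ⟪ξ, dw⟫`. -/
def AnnihilatesVariations {V : Type*} [NormedAddCommGroup V] [InnerProductSpace ℝ V] (T : ℝ)
    (q : ENNReal) (G dw : ℝ → V) : Prop :=
  ∀ ξ dξ, IsMeanZeroLoop T q ξ dξ → ∫ t in 0..T, ⟪ξ t, dw t⟫_ℝ = 0 →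
    ∫ t in 0..T, ⟪G t, dξ t⟫_ℝ = 0

section EulerEquation

variable {V : Type*} [NormedAddCommGroup V] [InnerProductSpace ℝ V] [FiniteDimensional ℝ V]
  {T p : ℝ} {G w dw z dz : ℝ → V} {H : V → ℝ}

theorem annihilatesVariations_iff_ae_eq (hT : 0 < T) (q : ENNReal)
    (hG : IntervalIntegrable G volume 0 T) (hw : IsLoop T w dw) :
    AnnihilatesVariations T q G dw ↔
      ∃ (c : ℝ) (a : V), ∀ᵐ t ∂volume.restrict (Ioc 0 T), G t = c • w t + a := by
  refine ⟨fun h ↦ ?_, fun ⟨c, a, hca⟩ ξ dξ hξ hξw ↦ ?_⟩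
  · refine exists_ae_eq_smul_add_const hG.1 (hw.continuous.intervalIntegrable 0 T).1
      fun v hv0 hvw ↦ ?_
    rw [← integral_of_le hT.le] at hv0 hvw ⊢
    obtain ⟨ξ, dξ, hξ, hξv⟩ := exists_isMeanZeroLoop_eqOn hT q v hv0
    have pairing (F : ℝ → V) : ∫ t in 0..T, ⟪F t, v t⟫_ℝ = ∫ t in 0..T, ⟪F t, dξ t⟫_ℝ :=
      integral_congr_Ioo_of_le hT.le fun t ht ↦ by simp only [hξv (Ioo_subset_Ioc_self ht)]
    rw [pairing, hw.integral_inner_deriv_eq_neg hξ.toIsLoop, neg_eq_zero] at hvw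
    rw [pairing]
    exact h ξ dξ hξ hvw
  · calc ∫ t in 0..T, ⟪G t, dξ t⟫_ℝ = ∫ t in 0..T, ⟪c • w t + a, dξ t⟫_ℝ :=
          integral_congr_ae_restrict <| by
            rw [uIoc_of_le hT.le]
            exact hca.mono fun t ht ↦ by simp only [ht]
      _ = c * ∫ t in 0..T, ⟪w t, dξ t⟫_ℝ := hξ.integral_inner_smul_add_const hw.continuous c a
      _ = 0 := by rw [hw.integral_inner_deriv_eq_neg hξ.toIsLoop, hξw, neg_zero, mul_zero]

theorem IsPosHomogeneous.annihilatesVariations_gradient_iff (hH : IsPosHomogeneous p H)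
    (hp : 1 < p) (hsmooth : ContDiffOn ℝ 1 H {0}ᶜ) (hT : 0 < T) (q : ENNReal) (hz : IsLoop T z dz)
    (hdz : MemLp dz (ENNReal.ofReal p) (volume.restrict (Ioc 0 T))) (hw : IsLoop T w dw)
    (hwz : ∫ t in 0..T, ⟪w t, dz t⟫_ℝ ≠ 0) :
    AnnihilatesVariations T q (fun t ↦ ∇ H (dz t)) dw ↔
      ∃ a, ∀ᵐ t ∂volume.restrict (Ioc 0 T),
        ∇ H (dz t) = (p * (∫ s in 0..T, H (dz s)) / ∫ s in 0..T, ⟪w s, dz s⟫_ℝ) • w t + a := by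
  have hG : IntervalIntegrable (fun t ↦ ∇ H (dz t)) volume 0 T :=
    (intervalIntegrable_iff_integrableOn_Ioc_of_le hT.le).2 <|
      hH.integrable_gradient_comp hp hsmooth hdz
  have hdiff : ∀ u ≠ 0, DifferentiableAt ℝ H u := fun u hu ↦
    (hsmooth.contDiffAt (isOpen_compl_singleton.mem_nhds hu)).differentiableAt one_ne_zero
  rw [annihilatesVariations_iff_ae_eq hT q hG hw]
  refine ⟨fun ⟨c, a, hca⟩ ↦ ⟨a, ?_⟩, fun ⟨a, ha⟩ ↦ ⟨_, a, ha⟩⟩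
  have hc : p * ∫ t in 0..T, H (dz t) = c * ∫ t in 0..T, ⟪w t, dz t⟫_ℝ := by
    calc p * ∫ t in 0..T, H (dz t) = ∫ t in 0..T, ⟪∇ H (dz t), dz t⟫_ℝ := by
          simp only [hH.inner_gradient_self (hdiff _), intervalIntegral.integral_const_mul]
      _ = ∫ t in 0..T, ⟪c • w t + a, dz t⟫_ℝ := integral_congr_ae_restrict <| by
          rw [uIoc_of_le hT.le]
          exact hca.mono fun t ht ↦ by simp only [ht]
      _ = c * ∫ t in 0..T, ⟪w t, dz t⟫_ℝ := hz.integral_inner_smul_add_const hw.continuous c a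
  rwa [hc, mul_div_cancel_right₀ c hwz]

end EulerEquation

section SupportFunction

variable {n : ℕ} {K : Set (E n)}

theorem suppFn_nonneg (hK : Bornology.IsBounded K) (h0 : 0 ∈ K) (u : E n) : 0 ≤ suppFn n K u := by
  obtain ⟨R, hR⟩ := hK.exists_norm_le
  have hle : ∀ x ∈ K, ⟪x, u⟫_ℝ ≤ R * ‖u‖ := fun x hx ↦
    (real_inner_le_norm x u).trans (mul_le_mul_of_nonneg_right (hR x hx) (norm_nonneg u))
  exact le_csSup ⟨R * ‖u‖, forall_mem_image.2 hle⟩ ⟨0, h0, inner_zero_left u⟩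

theorem isPosHomogeneous_suppFn (K : Set (E n)) : IsPosHomogeneous 1 (suppFn n K) := fun c hc u ↦ by
  have himage : (fun x ↦ ⟪x, c • u⟫_ℝ) '' K = c • (fun x ↦ ⟪x, u⟫_ℝ) '' K := by
    simp only [real_inner_smul_right, ← image_smul, image_image, smul_eq_mul]
  rw [suppFn, suppFn, himage, Real.sSup_smul_of_nonneg hc.le, smul_eq_mul, rpow_one]

end SupportFunction

/-- The complex structure `J` as a continuous linear map. -/
def complexStructure (n : ℕ) : E n →L[ℝ] E n :=
  LinearMap.toContinuousLinearMap
    { toFun := Jmap n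
      map_add' u v := by
        ext i
        simp only [Jmap, PiLp.add_apply]
        split_ifs <;> simp [add_comm]
      map_smul' c v := by
        ext i
        simp only [Jmap, PiLp.smul_apply]
        split_ifs <;> simp }

section LoopSpace

variable {n : ℕ} {p : ℝ} {K : Set (E n)} {z dz : ℝ → E n}

theorem IsLoop.jmap {T : ℝ} (hz : IsLoop T z dz) :
    IsLoop T (fun t ↦ Jmap n (z t)) fun t ↦ Jmap n (dz t) :=
  hz.map (complexStructure n)

theorem InE.isMeanZeroLoop (hz : InE n p z dz) :
    IsMeanZeroLoop (2 * π) (ENNReal.ofReal p) z dz :=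
  let ⟨hper, hint, hprim, hmem, hmean, _⟩ := hz
  ⟨⟨hper, hint, hprim⟩, hmem, hmean⟩

theorem InE.integral_inner_jmap_deriv (hz : InE n p z dz) :
    ∫ t in 0..(2 * π), ⟪Jmap n (z t), dz t⟫_ℝ = 2 := by
  obtain ⟨-, -, -, -, -, haction⟩ := hz
  linarith

theorem isCriticalPoint_iff_annihilatesVariations :
    IsCriticalPoint n p K z dz ↔ AnnihilatesVariations (2 * π) (ENNReal.ofReal p)
      (fun t ↦ ∇ (fun u ↦ suppFn n K u ^ p) (dz t)) fun t ↦ Jmap n (dz t) :=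
  ⟨fun h ξ dξ hξ ↦ h ξ dξ hξ.periodic hξ.intervalIntegrable hξ.eq_add_integral hξ.memLp
      hξ.integral_eq_zero,
    fun h ξ dξ hper hint hprim hmem hmean ↦ h ξ dξ ⟨⟨hper, hint, hprim⟩, hmem, hmean⟩⟩

end LoopSpace

theorem isCriticalPoint_iff_euler_general (n : ℕ) (K : Set (E n)) (hK : Bornology.IsBounded K)
    (h0 : (0 : E n) ∈ K) (hsupp : ContDiffOn ℝ 1 (suppFn n K) {(0 : E n)}ᶜ)
    (p : ℝ) (hp : 1 < p) (z dz : ℝ → E n) (hz : InE n p z dz) :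
    IsCriticalPoint n p K z dz ↔
      ∃ α : E n, ∀ᵐ t ∂(volume.restrict (Set.Ioc (0 : ℝ) (2 * π))),
        gradient (fun u ↦ suppFn n K u ^ p) (dz t) =
          (p / 2 * ∫ s in (0 : ℝ)..(2 * π), suppFn n K (dz s) ^ p) • Jmap n (z t) + α := by
  have hloop := hz.isMeanZeroLoop
  have haction := hz.integral_inner_jmap_deriv
  have hhom : IsPosHomogeneous p fun u ↦ suppFn n K u ^ p := by
    simpa only [one_mul] using (isPosHomogeneous_suppFn K).rpow (suppFn_nonneg hK h0) p
  have hsmooth : ContDiffOn ℝ 1 (fun u ↦ suppFn n K u ^ p) {0}ᶜ :=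
    hsupp.rpow_const_of_le (mod_cast hp.le)
  rw [isCriticalPoint_iff_annihilatesVariations,
    hhom.annihilatesVariations_gradient_iff hp hsmooth two_pi_pos _ hloop.toIsLoop hloop.memLp
      hloop.jmap (haction.trans_ne two_ne_zero), haction]
  simp only [div_mul_eq_mul_div]

/-- `z ∈ 𝓔_p` is a critical point of `I_p(z) = ∫₀^{2π} h_K^p(ż(t)) dt` iff it satisfies
the Euler equation `∇(h_K^p)(ż) = (p/2)·λ·Jz + α` a.e., where `λ = I_p(z)`. -/
theorem isCriticalPoint_iff_euler (n : ℕ) (K : Set (E n)) (hK : IsConvexBody n K)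
    (h0 : (0 : E n) ∈ interior K)
    (hsupp : ContDiffOn ℝ 1 (suppFn n K) {(0 : E n)}ᶜ)
    (p : ℝ) (hp : 1 < p) (z dz : ℝ → E n) (hz : InE n p z dz) :
    IsCriticalPoint n p K z dz ↔
      ∃ α : E n, ∀ᵐ t ∂(volume.restrict (Set.Ioc (0:ℝ) (2 * π))),
        gradient (fun u => suppFn n K u ^ p) (dz t) =
          (p / 2 * ∫ s in (0:ℝ)..(2 * π), suppFn n K (dz s) ^ p) • Jmap n (z t) + α :=
  isCriticalPoint_iff_euler_general n K hK.1.isBounded (interior_subset h0) hsupp p hp z dz hz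
end
end

section
/- Let p > 1. For every z ∈ 𝓔_p one has (∫₀^{2π} |ż(t)|^p dt)^{1/p} ≥ π^{−1/2}. Consequently, if K ⊂ ℝ^{2n} is a convex body containing 0 in its interior and α ≥ 1 is a constant with h_K(y) ≥ α^{−1/p}|y| for all y ∈ ℝ^{2n}, then ∫₀^{2π} h_K^p(ż(t)) dt ≥ π^{−p/2}/α > 0 for every z ∈ 𝓔_p. -/
open MeasureTheory Real Set Filter intervalIntegral Metric
open scoped InnerProductSpace Topology Pointwise

noncomputable section

/-!
The normalization of a loop `z ∈ 𝓔_p` reads `2 = ∫ ⟨Jz, ż⟩`, and this integral is bounded in two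
ways. A mean-zero `z` satisfies `sup |z| ≤ ∫ |ż|`, so `2 ≤ (∫ |ż|)²`; Young's and Wirtinger's
inequalities give `2 ≤ ∫ |ż|²`. By Hölder's inequality these become `2 ≤ ((2π)^e ‖ż‖_p)²` with
`e = 1 - 1/p` in the first case and, when `p ≥ 2`, `e = 1/2 - 1/p` in the second. Using the first
for `p ≤ 2` and the second for `p ≥ 2`, always `e ≤ 1/2`, so `2 ≤ 2π ‖ż‖_p²`.
-/

section AbsolutelyContinuous

variable {F : Type*} [NormedAddCommGroup F] [NormedSpace ℝ F]

/-- `f` is locally absolutely continuous on `ℝ` with almost everywhere derivative `f'`; encoded as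
`f` being an indefinite integral of the locally integrable function `f'`. -/
structure HasACDeriv (f f' : ℝ → F) : Prop where
  intervalIntegrable (a b : ℝ) : IntervalIntegrable f' volume a b
  integral_eq_sub (a b : ℝ) : ∫ t in a..b, f' t = f b - f a

theorem absolutelyContinuousOnInterval_of_dist_le {X Y : Type*} [PseudoMetricSpace X]
    [PseudoMetricSpace Y] {f : ℝ → X} {g : ℝ → Y} {a b : ℝ}
    (hg : AbsolutelyContinuousOnInterval g a b) (hfg : ∀ s t, dist (f s) (f t) ≤ dist (g s) (g t)) :
    AbsolutelyContinuousOnInterval f a b :=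
  squeeze_zero (fun _ ↦ Finset.sum_nonneg fun _ _ ↦ dist_nonneg)
    (fun _ ↦ Finset.sum_le_sum fun _ _ ↦ hfg _ _) hg

namespace HasACDeriv

variable {f f' : ℝ → F}

theorem eq_add_integral (hf : HasACDeriv f f') (c : ℝ) : f = fun t ↦ f c + ∫ s in c..t, f' s := by
  funext t
  rw [hf.integral_eq_sub, add_sub_cancel]

protected theorem continuous (hf : HasACDeriv f f') : Continuous f := by
  rw [hf.eq_add_integral 0]
  exact continuous_const.add (intervalIntegral.continuous_primitive hf.intervalIntegrable 0)

theorem norm_sub_le (hf : HasACDeriv f f') (s t : ℝ) : ‖f t - f s‖ ≤ |∫ r in s..t, ‖f' r‖| := by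
  rw [← hf.integral_eq_sub]
  exact intervalIntegral.norm_integral_le_abs_integral_norm

theorem absolutelyContinuousOnInterval (hf : HasACDeriv f f') (a b : ℝ) :
    AbsolutelyContinuousOnInterval f a b := by
  have hint (s t : ℝ) : IntervalIntegrable (fun r ↦ ‖f' r‖) volume s t :=
    (hf.intervalIntegrable s t).norm
  refine absolutelyContinuousOnInterval_of_dist_le
    ((hint a b).absolutelyContinuousOnInterval_intervalIntegral left_mem_uIcc) fun s t ↦ ?_
  rw [dist_comm, dist_comm (∫ _ in a..s, _), dist_eq_norm, Real.dist_eq,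
    intervalIntegral.integral_interval_sub_left (hint a t) (hint a s)]
  exact hf.norm_sub_le s t

theorem comp_continuousLinearMap {G : Type*} [NormedAddCommGroup G] [NormedSpace ℝ G]
    [CompleteSpace F] [CompleteSpace G] (hf : HasACDeriv f f') (L : F →L[ℝ] G) :
    HasACDeriv (fun t ↦ L (f t)) (fun t ↦ L (f' t)) where
  intervalIntegrable a b :=
    ⟨L.integrable_comp (hf.intervalIntegrable a b).1,
      L.integrable_comp (hf.intervalIntegrable a b).2⟩
  integral_eq_sub a b := by
    rw [L.intervalIntegral_comp_comm (hf.intervalIntegrable a b), hf.integral_eq_sub, map_sub]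

variable [CompleteSpace F]

theorem ae_hasDerivAt (hf : HasACDeriv f f') : ∀ᵐ t, HasDerivAt f (f' t) t := by
  have hloc : LocallyIntegrable f' volume := fun t ↦
    ⟨Ioc (t - 1) (t + 1), Ioc_mem_nhds (by linarith) (by linarith), (hf.intervalIntegrable _ _).1⟩
  filter_upwards [LocallyIntegrable.ae_hasDerivAt_integral hloc] with t ht
  rw [hf.eq_add_integral 0]
  exact (ht 0).const_add _

theorem of_hasDerivAt (hf : ∀ t, HasDerivAt f (f' t) t) (hf' : Continuous f') :
    HasACDeriv f f' where
  intervalIntegrable := hf'.intervalIntegrable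
  integral_eq_sub _ _ := intervalIntegral.integral_eq_sub_of_hasDerivAt (fun t _ ↦ hf t)
    (hf'.intervalIntegrable _ _)

theorem smul {𝕜 : Type*} [NormedField 𝕜] [NormedAlgebra ℝ 𝕜] [CompleteSpace 𝕜]
    [NormedSpace 𝕜 F] {φ φ' : ℝ → 𝕜} (hφ : HasACDeriv φ φ') (hf : HasACDeriv f f') :
    HasACDeriv (fun t ↦ φ t • f t) (fun t ↦ φ t • f' t + φ' t • f t) := by
  -- `φ • f` and the primitive of `g` are absolutely continuous with equal derivatives almost
  -- everywhere, so they differ by a constant.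
  set g : ℝ → F := fun t ↦ φ t • f' t + φ' t • f t
  have hg (a b : ℝ) : IntervalIntegrable g volume a b :=
    ((hf.intervalIntegrable a b).continuousOn_smul hφ.continuous.continuousOn).add
      ((hφ.intervalIntegrable a b).smul_continuousOn hf.continuous.continuousOn)
  refine ⟨hg, fun a b ↦ ?_⟩
  have hG : HasACDeriv (fun t ↦ ∫ s in a..t, g s) g :=
    ⟨hg, fun s t ↦ (intervalIntegral.integral_interval_sub_left (hg a t) (hg a s)).symm⟩
  have hac : AbsolutelyContinuousOnInterval (φ • f - fun t ↦ ∫ s in a..t, g s) a b :=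
    ((hφ.absolutelyContinuousOnInterval a b).smul (hf.absolutelyContinuousOnInterval a b)).sub
      (hG.absolutelyContinuousOnInterval a b)
  obtain ⟨C, hC⟩ := hac.const_of_ae_hasDerivAt_zero <| by
    filter_upwards [hφ.ae_hasDerivAt, hf.ae_hasDerivAt, hG.ae_hasDerivAt] with t h1 h2 h3 _
    simpa [g] using (h1.smul h2).sub h3
  have hba : φ b • f b - ∫ s in a..b, g s = φ a • f a - ∫ s in a..a, g s :=
    (hC b right_mem_uIcc).trans (hC a left_mem_uIcc).symm
  rw [intervalIntegral.integral_same, sub_zero] at hba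
  rw [← hba, sub_sub_cancel]

end HasACDeriv

end AbsolutelyContinuous

section Wirtinger

variable {a b : ℝ}

theorem fourierCoeffOn_of_hasACDeriv {G : Type*} [NormedAddCommGroup G] [NormedSpace ℂ G]
    [CompleteSpace G] (hab : a < b) {f f' : ℝ → G} (hf : HasACDeriv f f') (hper : f b = f a)
    (n : ℤ) :
    fourierCoeffOn hab f' n = (2 * π * Complex.I * n / (b - a)) • fourierCoeffOn hab f n := by
  have : Fact (0 < b - a) := ⟨sub_pos.2 hab⟩
  set e : ℝ → ℂ := fun t ↦ fourier (-n) (t : AddCircle (b - a))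
  have he_cont : Continuous e := by fun_prop
  set c : ℂ := -2 * π * Complex.I * n / (b - a : ℝ) with hc
  have he : HasACDeriv e fun t ↦ c * e t :=
    .of_hasDerivAt (hasDerivAt_fourier_neg (b - a) n) (by fun_prop)
  have heab : e b = e a := by
    have : (b : AddCircle (b - a)) = a := by simpa using AddCircle.coe_add_period (b - a) a
    simp only [e, this]
  have hint' : IntervalIntegrable (fun t ↦ e t • f' t) volume a b :=
    (hf.intervalIntegrable a b).continuousOn_smul he_cont.continuousOn
  have hint : IntervalIntegrable (fun t ↦ (c * e t) • f t) volume a b :=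
    ((he_cont.const_mul c).smul hf.continuous).intervalIntegrable a b
  have hparts : (∫ t in a..b, e t • f' t) + c • ∫ t in a..b, e t • f t = 0 := by
    rw [← intervalIntegral.integral_smul]
    simp_rw [smul_smul]
    rw [← intervalIntegral.integral_add hint' hint, (he.smul hf).integral_eq_sub, heab, hper,
      sub_self]
  rw [fourierCoeffOn_eq_integral, fourierCoeffOn_eq_integral, eq_neg_of_add_eq_zero_left hparts,
    ← neg_smul, smul_comm]
  congr 2
  push_cast [hc]
  ring

theorem norm_fourierCoeffOn_le_of_hasACDeriv {G : Type*} [NormedAddCommGroup G] [NormedSpace ℂ G]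
    [CompleteSpace G] (hab : a < b) {f f' : ℝ → G} (hf : HasACDeriv f f') (hper : f b = f a)
    (hmean : ∫ t in a..b, f t = 0) (n : ℤ) :
    ‖fourierCoeffOn hab f n‖ ≤ (b - a) / (2 * π) * ‖fourierCoeffOn hab f' n‖ := by
  have hba : 0 < b - a := sub_pos.2 hab
  rcases eq_or_ne n 0 with rfl | hn
  · have hzero : fourierCoeffOn hab f 0 = 0 := by
      simp [fourierCoeffOn_eq_integral, hmean]
    rw [hzero, norm_zero]
    positivity
  · have hn1 : (1 : ℝ) ≤ |(n : ℝ)| := mod_cast Int.one_le_abs hn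
    have hnorm : ‖2 * π * Complex.I * n / (b - a)‖ = 2 * π / (b - a) * |(n : ℝ)| := by
      rw [← Complex.ofReal_sub, norm_div, Complex.norm_real, norm_of_nonneg hba.le]
      simp only [norm_mul, Complex.norm_ofNat, Complex.norm_real, norm_of_nonneg pi_pos.le,
        Complex.norm_I, mul_one, Complex.norm_intCast]
      ring
    calc ‖fourierCoeffOn hab f n‖
        ≤ |(n : ℝ)| * ‖fourierCoeffOn hab f n‖ := le_mul_of_one_le_left (norm_nonneg _) hn1
      _ = (b - a) / (2 * π) * ‖fourierCoeffOn hab f' n‖ := by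
          rw [fourierCoeffOn_of_hasACDeriv hab hf hper, norm_smul, hnorm]
          field_simp

theorem integral_sq_norm_le_of_hasACDeriv_complex (hab : a < b) {f f' : ℝ → ℂ}
    (hf : HasACDeriv f f') (hper : f b = f a) (hmean : ∫ t in a..b, f t = 0)
    (hf' : MemLp f' 2 (volume.restrict (Ioc a b))) :
    ∫ t in a..b, ‖f t‖ ^ 2 ≤ ((b - a) / (2 * π)) ^ 2 * ∫ t in a..b, ‖f' t‖ ^ 2 := by
  have hfL : MemLp f 2 (volume.restrict (Ioc a b)) :=
    (memLp_two_iff_integrable_sq_norm hf.continuous.aestronglyMeasurable).2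
      (hf.continuous.norm.pow 2).integrableOn_Ioc
  have hle := hasSum_le (fun n ↦ ?_) (hasSum_sq_fourierCoeffOn hab hfL)
    ((hasSum_sq_fourierCoeffOn hab hf').mul_left (((b - a) / (2 * π)) ^ 2))
  · rw [smul_eq_mul, smul_eq_mul, mul_left_comm] at hle
    exact le_of_mul_le_mul_left hle (inv_pos.2 (sub_pos.2 hab))
  · rw [← mul_pow]
    gcongr
    exact norm_fourierCoeffOn_le_of_hasACDeriv hab hf hper hmean n

theorem integral_sq_norm_le_of_hasACDeriv {V : Type*} [NormedAddCommGroup V] [InnerProductSpace ℝ V]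
    [FiniteDimensional ℝ V] (hab : a < b) {f f' : ℝ → V} (hf : HasACDeriv f f')
    (hper : f b = f a) (hmean : ∫ t in a..b, f t = 0)
    (hf' : MemLp f' 2 (volume.restrict (Ioc a b))) :
    ∫ t in a..b, ‖f t‖ ^ 2 ≤ ((b - a) / (2 * π)) ^ 2 * ∫ t in a..b, ‖f' t‖ ^ 2 := by
  have : CompleteSpace V := FiniteDimensional.complete ℝ V
  let v := stdOrthonormalBasis ℝ V
  let coord i : V →L[ℝ] ℂ := Complex.ofRealCLM ∘L innerSL ℝ (v i)
  have hcoord_norm i (x : V) : ‖coord i x‖ = ‖⟪v i, x⟫_ℝ‖ := Complex.norm_real _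
  have hcoord i : ∫ t in a..b, ‖coord i (f t)‖ ^ 2 ≤
      ((b - a) / (2 * π)) ^ 2 * ∫ t in a..b, ‖coord i (f' t)‖ ^ 2 := by
    refine integral_sq_norm_le_of_hasACDeriv_complex hab
      (hf.comp_continuousLinearMap (coord i)) ?_ ?_ ((coord i).comp_memLp' hf')
    · rw [hper]
    · rw [(coord i).intervalIntegral_comp_comm (hf.continuous.intervalIntegrable a b), hmean,
        map_zero]
  simp_rw [← v.sum_sq_norm_inner_right, ← hcoord_norm]
  rw [intervalIntegral.integral_finsetSum, intervalIntegral.integral_finsetSum, Finset.mul_sum]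
  · exact Finset.sum_le_sum fun i _ ↦ hcoord i
  · intro i _
    rw [intervalIntegrable_iff_integrableOn_Ioc_of_le hab.le]
    exact ((coord i).comp_memLp' hf').norm.integrable_sq
  · intro i _
    exact (((coord i).continuous.comp hf.continuous).norm.pow 2).intervalIntegrable a b

end Wirtinger

section Action

variable {F : Type*} [NormedAddCommGroup F]

theorem rpow_integral_norm_rpow_le_mul_measureReal_univ {X : Type*} [MeasurableSpace X]
    {μ : Measure X} [IsFiniteMeasure μ] {f : X → F} {q p : ℝ} (hq : 0 < q) (hqp : q ≤ p)
    (hf : MemLp f (ENNReal.ofReal p) μ) :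
    (∫ x, ‖f x‖ ^ q ∂μ) ^ (1 / q) ≤
      (∫ x, ‖f x‖ ^ p ∂μ) ^ (1 / p) * μ.real univ ^ (1 / q - 1 / p) := by
  have hp : 0 < p := hq.trans_le hqp
  have hle := ENNReal.ofReal_le_ofReal hqp
  have hexp : 0 ≤ 1 / q - 1 / p := sub_nonneg.2 (one_div_le_one_div_of_le hq hqp)
  have hnorm {r : ℝ} (hr : 0 < r) (hfr : MemLp f (ENNReal.ofReal r) μ) :
      (eLpNorm f (ENNReal.ofReal r) μ).toReal = (∫ x, ‖f x‖ ^ r ∂μ) ^ (1 / r) := by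
    rw [hfr.eLpNorm_eq_integral_rpow_norm (by simpa using hr) ENNReal.ofReal_ne_top,
      ENNReal.toReal_ofReal hr.le, ENNReal.toReal_ofReal (by positivity), one_div]
  have hmono := eLpNorm_le_eLpNorm_mul_rpow_measure_univ hle hf.1
  rw [ENNReal.toReal_ofReal hq.le, ENNReal.toReal_ofReal hp.le] at hmono
  have htop := ENNReal.mul_ne_top hf.2.ne
    (ENNReal.rpow_ne_top_of_nonneg hexp (measure_ne_top μ univ))
  have hreal := ENNReal.toReal_mono htop hmono
  rwa [ENNReal.toReal_mul, hnorm hp hf, hnorm hq (hf.mono_exponent hle), ← ENNReal.toReal_rpow]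
    at hreal

theorem HasACDeriv.norm_le_integral_norm [NormedSpace ℝ F] [CompleteSpace F] {f f' : ℝ → F}
    {a b t : ℝ} (hf : HasACDeriv f f') (hab : a < b) (hmean : ∫ s in a..b, f s = 0)
    (ht : t ∈ Icc a b) :
    ‖f t‖ ≤ ∫ s in a..b, ‖f' s‖ := by
  have hosc : ∀ s ∈ uIoc a b, ‖f t - f s‖ ≤ ∫ s in a..b, ‖f' s‖ := by
    intro s hs
    rw [uIoc_of_le hab.le] at hs
    calc ‖f t - f s‖ ≤ |∫ r in s..t, ‖f' r‖| := hf.norm_sub_le s t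
      _ ≤ |∫ r in a..b, ‖f' r‖| := by
          refine intervalIntegral.abs_integral_mono_interval ?_ (ae_of_all _ fun _ ↦ norm_nonneg _)
            (hf.intervalIntegrable a b).norm
          rw [uIoc_of_le hab.le]
          exact Ioc_subset_Ioc (le_min hs.1.le ht.1) (max_le hs.2 ht.2)
      _ = ∫ r in a..b, ‖f' r‖ :=
          abs_of_nonneg (intervalIntegral.integral_nonneg hab.le fun _ _ ↦ norm_nonneg _)
  have hmean_sub : ∫ s in a..b, (f t - f s) = (b - a) • f t := by
    rw [intervalIntegral.integral_sub intervalIntegrable_const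
      (hf.continuous.intervalIntegrable a b), hmean, sub_zero, intervalIntegral.integral_const]
  have hle := intervalIntegral.norm_integral_le_of_norm_le_const hosc
  rw [hmean_sub, norm_smul, norm_of_nonneg (sub_pos.2 hab).le, abs_of_pos (sub_pos.2 hab),
    mul_comm] at hle
  exact le_of_mul_le_mul_right hle (sub_pos.2 hab)

variable {V : Type*} [NormedAddCommGroup V] [InnerProductSpace ℝ V] {J : V → V} {f f' : ℝ → V}
  {a b p : ℝ}

theorem HasACDeriv.abs_integral_inner_le_sq_integral_norm [CompleteSpace V] (hJ : ∀ v, ‖J v‖ ≤ ‖v‖)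
    (hf : HasACDeriv f f') (hab : a < b) (hmean : ∫ t in a..b, f t = 0) :
    |∫ t in a..b, ⟪J (f t), f' t⟫_ℝ| ≤ (∫ t in a..b, ‖f' t‖) ^ 2 := by
  have hpt : ∀ t ∈ Ioc a b, ‖⟪J (f t), f' t⟫_ℝ‖ ≤ (∫ s in a..b, ‖f' s‖) * ‖f' t‖ := fun t ht ↦
    calc ‖⟪J (f t), f' t⟫_ℝ‖ ≤ ‖J (f t)‖ * ‖f' t‖ := norm_inner_le_norm _ _
      _ ≤ (∫ s in a..b, ‖f' s‖) * ‖f' t‖ := by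
          gcongr
          exact (hJ _).trans (hf.norm_le_integral_norm hab hmean (Ioc_subset_Icc_self ht))
  have hint := (hf.intervalIntegrable a b).norm.const_mul (∫ s in a..b, ‖f' s‖)
  have hle := intervalIntegral.norm_integral_le_of_norm_le hab.le (ae_of_all _ hpt) hint
  rwa [intervalIntegral.integral_const_mul, ← sq] at hle

theorem HasACDeriv.abs_integral_inner_le_integral_sq_norm [FiniteDimensional ℝ V]
    (hJ : ∀ v, ‖J v‖ ≤ ‖v‖) (hf : HasACDeriv f f') (hab : a < b) (hper : f b = f a)
    (hmean : ∫ t in a..b, f t = 0) (hf' : MemLp f' 2 (volume.restrict (Ioc a b))) :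
    |∫ t in a..b, ⟪J (f t), f' t⟫_ℝ| ≤ (b - a) / (2 * π) * ∫ t in a..b, ‖f' t‖ ^ 2 := by
  set k := (b - a) / (2 * π)
  have hk : 0 < k := div_pos (sub_pos.2 hab) two_pi_pos
  -- Young's inequality, weighted so as to balance the two sides of Wirtinger's inequality.
  have hpt (t : ℝ) : ‖⟪J (f t), f' t⟫_ℝ‖ ≤ (2 * k)⁻¹ * ‖f t‖ ^ 2 + k / 2 * ‖f' t‖ ^ 2 :=
    calc ‖⟪J (f t), f' t⟫_ℝ‖ ≤ ‖J (f t)‖ * ‖f' t‖ := norm_inner_le_norm _ _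
      _ ≤ ‖f t‖ * ‖f' t‖ := by gcongr; exact hJ _
      _ ≤ (2 * k)⁻¹ * ‖f t‖ ^ 2 + k / 2 * ‖f' t‖ ^ 2 := by
          rw [← sub_nonneg]
          have : (2 * k)⁻¹ * ‖f t‖ ^ 2 + k / 2 * ‖f' t‖ ^ 2 - ‖f t‖ * ‖f' t‖ =
              (2 * k)⁻¹ * (‖f t‖ - k * ‖f' t‖) ^ 2 := by field_simp; ring
          rw [this]
          positivity
  have hint : IntervalIntegrable (fun t ↦ (2 * k)⁻¹ * ‖f t‖ ^ 2) volume a b :=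
    ((hf.continuous.norm.pow 2).intervalIntegrable a b).const_mul _
  have hint' : IntervalIntegrable (fun t ↦ k / 2 * ‖f' t‖ ^ 2) volume a b :=
    ((intervalIntegrable_iff_integrableOn_Ioc_of_le hab.le).2 hf'.norm.integrable_sq).const_mul _
  calc |∫ t in a..b, ⟪J (f t), f' t⟫_ℝ|
      ≤ ∫ t in a..b, ((2 * k)⁻¹ * ‖f t‖ ^ 2 + k / 2 * ‖f' t‖ ^ 2) :=
        intervalIntegral.norm_integral_le_of_norm_le hab.le (ae_of_all _ fun t _ ↦ hpt t)
          (hint.add hint')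
    _ = (2 * k)⁻¹ * (∫ t in a..b, ‖f t‖ ^ 2) + k / 2 * ∫ t in a..b, ‖f' t‖ ^ 2 := by
        rw [intervalIntegral.integral_add hint hint', intervalIntegral.integral_const_mul,
          intervalIntegral.integral_const_mul]
    _ ≤ (2 * k)⁻¹ * (k ^ 2 * ∫ t in a..b, ‖f' t‖ ^ 2) + k / 2 * ∫ t in a..b, ‖f' t‖ ^ 2 := by
        gcongr
        exact integral_sq_norm_le_of_hasACDeriv hab hf hper hmean hf'
    _ = k * ∫ t in a..b, ‖f' t‖ ^ 2 := by field_simp; ring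

theorem HasACDeriv.abs_integral_inner_le_sq_Lp_of_one_le [CompleteSpace V] (hJ : ∀ v, ‖J v‖ ≤ ‖v‖)
    (hf : HasACDeriv f f') (hab : a < b) (hmean : ∫ t in a..b, f t = 0) (hp : 1 ≤ p)
    (hf' : MemLp f' (ENNReal.ofReal p) (volume.restrict (Ioc a b))) :
    |∫ t in a..b, ⟪J (f t), f' t⟫_ℝ| ≤
      ((∫ t in a..b, ‖f' t‖ ^ p) ^ (1 / p) * (b - a) ^ (1 - 1 / p)) ^ 2 := by
  refine (hf.abs_integral_inner_le_sq_integral_norm hJ hab hmean).trans ?_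
  have hholder := rpow_integral_norm_rpow_le_mul_measureReal_univ one_pos hp hf'
  simp only [rpow_one, div_one, measureReal_restrict_apply_univ,
    Real.volume_real_Ioc_of_le hab.le] at hholder
  rw [intervalIntegral.integral_of_le hab.le, intervalIntegral.integral_of_le hab.le]
  gcongr

theorem HasACDeriv.abs_integral_inner_le_sq_Lp_of_two_le [FiniteDimensional ℝ V]
    (hJ : ∀ v, ‖J v‖ ≤ ‖v‖) (hf : HasACDeriv f f') (hab : a < b) (hper : f b = f a)
    (hmean : ∫ t in a..b, f t = 0) (hp : 2 ≤ p)
    (hf' : MemLp f' (ENNReal.ofReal p) (volume.restrict (Ioc a b))) :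
    |∫ t in a..b, ⟪J (f t), f' t⟫_ℝ| ≤ (b - a) / (2 * π) *
      ((∫ t in a..b, ‖f' t‖ ^ p) ^ (1 / p) * (b - a) ^ (1 / 2 - 1 / p)) ^ 2 := by
  have hf'2 : MemLp f' 2 (volume.restrict (Ioc a b)) :=
    hf'.mono_exponent (by simpa using ENNReal.ofReal_le_ofReal hp)
  refine (hf.abs_integral_inner_le_integral_sq_norm hJ hab hper hmean hf'2).trans ?_
  have hholder := rpow_integral_norm_rpow_le_mul_measureReal_univ two_pos hp hf'
  simp only [rpow_two, ← Real.sqrt_eq_rpow, measureReal_restrict_apply_univ,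
    Real.volume_real_Ioc_of_le hab.le] at hholder
  rw [intervalIntegral.integral_of_le hab.le, intervalIntegral.integral_of_le hab.le]
  gcongr
  exact (Real.sqrt_le_left (by positivity)).1 hholder

end Action

section ComplexStructure

/-- The index of the coordinate conjugate to the `i`-th one: `J` exchanges the entries `2k` and
`2k + 1` up to sign. -/
def conjIndex (n : ℕ) (i : Fin (2 * n)) : Fin (2 * n) :=
  if _h : i.val % 2 = 0 then ⟨i.val + 1, by have := i.isLt; omega⟩
  else ⟨i.val - 1, by have := i.isLt; omega⟩

theorem conjIndex_involutive (n : ℕ) : Function.Involutive (conjIndex n) := by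
  intro i
  ext
  grind [conjIndex]

theorem norm_Jmap_apply (n : ℕ) (v : E n) (i : Fin (2 * n)) :
    ‖Jmap n v i‖ = ‖v (conjIndex n i)‖ := by
  simp only [Jmap, conjIndex]
  split_ifs
  · exact norm_neg _
  · rfl

theorem norm_Jmap (n : ℕ) (v : E n) : ‖Jmap n v‖ = ‖v‖ := by
  simp_rw [EuclideanSpace.norm_eq, norm_Jmap_apply]
  rw [← Equiv.sum_comp (conjIndex_involutive n).toPerm fun i ↦ ‖v i‖ ^ 2]
  rfl

end ComplexStructure

section Loops

variable {n : ℕ} {p : ℝ} {z dz : ℝ → E n}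

theorem InE.hasACDeriv (h : InE n p z dz) : HasACDeriv z dz := by
  obtain ⟨-, hint, hz, -⟩ := h
  refine ⟨hint, fun a b ↦ ?_⟩
  rw [hz a, hz b, add_sub_add_left_eq_sub,
    intervalIntegral.integral_interval_sub_left (hint 0 b) (hint 0 a)]

theorem InE.exists_two_le_sq_Lp_mul_rpow (h : InE n p z dz) (hp : 1 ≤ p) :
    ∃ e ≤ (1 / 2 : ℝ),
      2 ≤ ((∫ t in (0 : ℝ)..(2 * π), ‖dz t‖ ^ p) ^ (1 / p) * (2 * π) ^ e) ^ 2 := by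
  have hz := h.hasACDeriv
  obtain ⟨hper, -, -, hLp, hmean, hact⟩ := h
  have haction : 2 ≤ |∫ t in (0 : ℝ)..(2 * π), ⟪Jmap n (z t), dz t⟫_ℝ| :=
    le_abs.2 (.inl (by linarith))
  have hJ (v : E n) : ‖Jmap n v‖ ≤ ‖v‖ := (norm_Jmap n v).le
  rcases le_total p 2 with hp2 | hp2
  · refine ⟨1 - 1 / p, ?_, haction.trans ?_⟩
    · linarith [one_div_le_one_div_of_le (one_pos.trans_le hp) hp2]
    · simpa only [sub_zero] using
        hz.abs_integral_inner_le_sq_Lp_of_one_le hJ two_pi_pos hmean hp hLp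
  · refine ⟨1 / 2 - 1 / p, sub_le_self _ (by positivity), haction.trans ?_⟩
    simpa only [sub_zero, div_self two_pi_pos.ne', one_mul] using
      hz.abs_integral_inner_le_sq_Lp_of_two_le hJ two_pi_pos hper.eq hmean hp2 hLp

theorem InE.rpow_neg_half_le_Lp (h : InE n p z dz) (hp : 1 ≤ p) :
    π ^ (-(1 : ℝ) / 2) ≤ (∫ t in (0 : ℝ)..(2 * π), ‖dz t‖ ^ p) ^ (1 / p) := by
  obtain ⟨e, he, htwo⟩ := h.exists_two_le_sq_Lp_mul_rpow hp
  set N := (∫ t in (0 : ℝ)..(2 * π), ‖dz t‖ ^ p) ^ (1 / p)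
  have hN : 0 ≤ N := rpow_nonneg
    (intervalIntegral.integral_nonneg two_pi_pos.le fun _ _ ↦ by positivity) _
  have hpow : (2 * π) ^ e ≤ √(2 * π) := by
    rw [Real.sqrt_eq_rpow]
    exact rpow_le_rpow_of_exponent_le (by linarith [pi_gt_three]) he
  have hle : 2 ≤ N ^ 2 * (2 * π) := by
    calc 2 ≤ (N * (2 * π) ^ e) ^ 2 := htwo
      _ ≤ (N * √(2 * π)) ^ 2 := by gcongr
      _ = N ^ 2 * (2 * π) := by rw [mul_pow, sq_sqrt two_pi_pos.le]
  rw [neg_div, rpow_neg pi_pos.le, ← Real.sqrt_eq_rpow, ← Real.sqrt_inv]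
  exact Real.sqrt_le_iff.2 ⟨hN, (inv_le_iff_one_le_mul₀ pi_pos).2 (by linarith)⟩

theorem InE.rpow_neg_div_two_le_integral (h : InE n p z dz) (hp : 1 ≤ p) :
    π ^ (-p / 2) ≤ ∫ t in (0 : ℝ)..(2 * π), ‖dz t‖ ^ p := by
  have hI : 0 ≤ ∫ t in (0 : ℝ)..(2 * π), ‖dz t‖ ^ p :=
    intervalIntegral.integral_nonneg two_pi_pos.le fun _ _ ↦ by positivity
  calc π ^ (-p / 2) = (π ^ (-(1 : ℝ) / 2)) ^ p := by rw [← rpow_mul pi_pos.le]; congr 1; ring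
    _ ≤ ((∫ t in (0 : ℝ)..(2 * π), ‖dz t‖ ^ p) ^ (1 / p)) ^ p := by
        gcongr
        exact h.rpow_neg_half_le_Lp hp
    _ = ∫ t in (0 : ℝ)..(2 * π), ‖dz t‖ ^ p := by
        rw [← rpow_mul hI, one_div_mul_cancel (by positivity), rpow_one]

end Loops

section SupportFunction

theorem bddAbove_inner_image {V : Type*} [NormedAddCommGroup V] [InnerProductSpace ℝ V]
    {K : Set V} (hK : Bornology.IsBounded K) (u : V) : BddAbove ((fun x ↦ ⟪x, u⟫_ℝ) '' K) := by
  obtain ⟨R, hR⟩ := hK.exists_norm_le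
  refine ⟨R * ‖u‖, forall_mem_image.2 fun x hx ↦ (real_inner_le_norm x u).trans ?_⟩
  gcongr
  exact hR x hx

variable {n : ℕ} {K : Set (E n)}

theorem suppFn_zero_s8 (hK : K.Nonempty) : suppFn n K 0 = 0 := by
  simp [suppFn, hK.image_const]

theorem exists_lipschitzWith_suppFn (hK : Bornology.IsBounded K) (hne : K.Nonempty) :
    ∃ R, LipschitzWith R (suppFn n K) := by
  obtain ⟨R, hR, hKR⟩ := hK.exists_pos_norm_le
  refine ⟨R.toNNReal, .of_le_add_mul _ fun u v ↦ csSup_le (hne.image _) <|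
    forall_mem_image.2 fun x hx ↦ ?_⟩
  calc ⟪x, u⟫_ℝ = ⟪x, v⟫_ℝ + ⟪x, u - v⟫_ℝ := by rw [← inner_add_right, add_sub_cancel]
    _ ≤ suppFn n K v + ‖x‖ * ‖u - v‖ := by
        gcongr
        · exact le_csSup (bddAbove_inner_image hK v) (mem_image_of_mem _ hx)
        · exact real_inner_le_norm _ _
    _ ≤ suppFn n K v + R.toNNReal * dist u v := by
        rw [Real.coe_toNNReal R hR.le, dist_eq_norm]
        gcongr
        exact hKR x hx

theorem rpow_mul_integral_norm_rpow_le_integral_suppFn_rpow {X : Type*} [MeasurableSpace X]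
    {μ : Measure X} {f : X → E n} {p c : ℝ} (hK : Bornology.IsBounded K) (hne : K.Nonempty)
    (hp : 0 < p) (hc : 0 ≤ c) (hle : ∀ y, c * ‖y‖ ≤ suppFn n K y)
    (hf : MemLp f (ENNReal.ofReal p) μ) :
    c ^ p * ∫ x, ‖f x‖ ^ p ∂μ ≤ ∫ x, suppFn n K (f x) ^ p ∂μ := by
  obtain ⟨R, hR⟩ := exists_lipschitzWith_suppFn hK hne
  have hp_ne : ENNReal.ofReal p ≠ 0 := by simpa using hp
  have hnonneg (y : E n) : 0 ≤ suppFn n K y := (by positivity : 0 ≤ c * ‖y‖).trans (hle y)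
  have hint : Integrable (fun x ↦ ‖f x‖ ^ p) μ := by
    simpa [hp.le] using hf.integrable_norm_rpow hp_ne ENNReal.ofReal_ne_top
  have hint_supp : Integrable (fun x ↦ suppFn n K (f x) ^ p) μ := by
    simpa [hp.le, abs_of_nonneg (hnonneg _)] using
      (hR.comp_memLp (suppFn_zero_s8 hne) hf).integrable_norm_rpow hp_ne ENNReal.ofReal_ne_top
  rw [← MeasureTheory.integral_const_mul]
  refine integral_mono (hint.const_mul _) hint_supp fun x ↦ ?_
  rw [← mul_rpow hc (norm_nonneg _)]
  exact rpow_le_rpow (by positivity) (hle _) hp.le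

end SupportFunction

theorem loop_Lp_lower_bound_general (n : ℕ) (p : ℝ) (hp : 1 ≤ p) :
    (∀ z dz : ℝ → E n, InE n p z dz →
      (∫ t in (0:ℝ)..(2 * π), ‖dz t‖ ^ p) ^ (1 / p) ≥ π ^ (-(1:ℝ) / 2)) ∧
    (∀ K : Set (E n), Bornology.IsBounded K → K.Nonempty →
      ∀ α : ℝ, 0 < α → (∀ y : E n, suppFn n K y ≥ α ^ (-(1:ℝ) / p) * ‖y‖) →
      ∀ z dz : ℝ → E n, InE n p z dz →
        (∫ t in (0:ℝ)..(2 * π), suppFn n K (dz t) ^ p) ≥ π ^ (-p / 2) / α ∧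
          (0:ℝ) < π ^ (-p / 2) / α) := by
  refine ⟨fun z dz h ↦ h.rpow_neg_half_le_Lp hp, fun K hK hne α hα hsupp z dz h ↦
    ⟨?_, by positivity⟩⟩
  have hp0 : 0 < p := one_pos.trans_le hp
  have ⟨_, _, _, hLp, _⟩ := h
  calc π ^ (-p / 2) / α = (α ^ (-(1 : ℝ) / p)) ^ p * π ^ (-p / 2) := by
        rw [← rpow_mul hα.le, div_mul_cancel₀ _ hp0.ne', rpow_neg_one, inv_mul_eq_div]
    _ ≤ (α ^ (-(1 : ℝ) / p)) ^ p * ∫ t in (0 : ℝ)..(2 * π), ‖dz t‖ ^ p := by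
        gcongr
        exact h.rpow_neg_div_two_le_integral hp
    _ ≤ ∫ t in (0 : ℝ)..(2 * π), suppFn n K (dz t) ^ p := by
        simp only [intervalIntegral.integral_of_le two_pi_pos.le]
        exact rpow_mul_integral_norm_rpow_le_integral_suppFn_rpow hK hne hp0
          (by positivity) hsupp hLp

/-- For every `z ∈ 𝓔_p` one has `‖ż‖_{L^p} ≥ π^{-1/2}`; consequently, if
`h_K(y) ≥ α^{-1/p}|y|` for some `α ≥ 1`, then `∫₀^{2π} h_K^p(ż) ≥ π^{-p/2}/α > 0`. -/
theorem loop_Lp_lower_bound (n : ℕ) (p : ℝ) (hp : 1 < p) :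
    (∀ z dz : ℝ → E n, InE n p z dz →
      (∫ t in (0:ℝ)..(2 * π), ‖dz t‖ ^ p) ^ (1 / p) ≥ π ^ (-(1:ℝ) / 2)) ∧
    (∀ K : Set (E n), IsConvexBody n K → (0 : E n) ∈ interior K →
      ∀ α : ℝ, 1 ≤ α → (∀ y : E n, suppFn n K y ≥ α ^ (-(1:ℝ) / p) * ‖y‖) →
      ∀ z dz : ℝ → E n, InE n p z dz →
        (∫ t in (0:ℝ)..(2 * π), suppFn n K (dz t) ^ p) ≥ π ^ (-p / 2) / α ∧
          (0:ℝ) < π ^ (-p / 2) / α) := by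
  exact ⟨(loop_Lp_lower_bound_general n p hp.le).1, fun K hK h0 α hα ↦
    (loop_Lp_lower_bound_general n p hp.le).2 K hK.1.isBounded ⟨0, interior_subset h0⟩ α
      (one_pos.trans_le hα)⟩
end
end
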